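/- arXiv:2306.15147 — 2 statements merged into one kernel-verified Lean document; each statement's English description precedes it below -/
import Mathlib

section
/- Let d ≥ 2 and 1 ≤ n < d. For Lebesgue-almost-every choice of the coefficient tuples ((b^{(j)}_1, a^{(j)}_1), …, (b^{(j)}_{r_j}, a^{(j)}_{r_j})) ∈ (ℝ^d × ℝ)^{r_j}, j = 1, …, n (with each r_j ≥ 2 fixed), the set X = X_1 ∩ ⋯ ∩ X_n, where X_j is the bend locus of the convex PL function f_j(x) = max_{1≤i≤r_j}(⟨x, b^{(j)}_i⟩ + a^{(j)}_i), is (d−n−1)-connected. -/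
open scoped RealInnerProductSpace
open MeasureTheory

/-- The convex PL function `x ↦ max_{1 ≤ i ≤ r} (⟪x, b i⟫ + a i)` (an `iSup` over the
nonempty finite index type `Fin r`, hence a maximum). -/
noncomputable def plMax {d r : ℕ} (b : Fin r → EuclideanSpace ℝ (Fin d)) (a : Fin r → ℝ) :
    EuclideanSpace ℝ (Fin d) → ℝ :=
  fun x => ⨆ i : Fin r, (⟪x, b i⟫ + a i)

/-- The bend locus of a convex PL function: the set of points where it is not differentiable. -/
def bendLocus {d r : ℕ} (b : Fin r → EuclideanSpace ℝ (Fin d)) (a : Fin r → ℝ) :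
    Set (EuclideanSpace ℝ (Fin d)) :=
  {x | ¬ DifferentiableAt ℝ (plMax b a) x}

/-- A topological space `Y` is `m`-connected (`m ≥ 0`): it is nonempty, path-connected,
and all homotopy groups `π_k(Y, y)` for `1 ≤ k ≤ m` and all basepoints `y` are trivial. -/
def SpaceMConnected (m : ℕ) (Y : Type*) [TopologicalSpace Y] : Prop :=
  Nonempty Y ∧ PathConnectedSpace Y ∧
    ∀ k : ℕ, 1 ≤ k → k ≤ m → ∀ y : Y, Subsingleton (HomotopyGroup (Fin k) Y y)

/-! ### Neighbourhood extensors -/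

section NbhdExtensor

variable {E : Type*} [NormedAddCommGroup E]

/-- A set `A` in `E` is a neighbourhood extensor (relative to `E`) if every continuous map from a
closed subset of `E` to `A` extends to an open neighbourhood. -/
def IsNbhdExtensor (A : Set E) : Prop :=
  ∀ (Z : Set E) (f : E → E), IsClosed Z → ContinuousOn f Z → Set.MapsTo f Z A →
    ∃ (W : Set E) (g : E → E), IsOpen W ∧ Z ⊆ W ∧ ContinuousOn g W ∧ Set.MapsTo g W A ∧
      Set.EqOn g f Z

theorem isNbhdExtensor_empty : IsNbhdExtensor (∅ : Set E) := by
  intro Z f _ _ hm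
  have hZ : Z = ∅ := Set.eq_empty_of_forall_notMem fun x hx => hm hx
  subst hZ
  exact ⟨∅, f, isOpen_empty, le_rfl, continuousOn_empty _, Set.mapsTo_empty _ _,
    Set.eqOn_empty _ _⟩

/-- The nearest point projection onto a nonempty closed convex set is a continuous retraction. -/
theorem exists_continuous_retraction_of_convex [InnerProductSpace ℝ E] [CompleteSpace E]
    {K : Set E} (hne : K.Nonempty) (hc : IsClosed K) (hK : Convex ℝ K) :
    ∃ g : E → E, Continuous g ∧ (∀ x, g x ∈ K) ∧ ∀ x ∈ K, g x = x := by
  choose g hgK hg using exists_norm_eq_iInf_of_complete_convex hne hc.isComplete hK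
  have hin : ∀ u, ∀ w ∈ K, ⟪u - g u, w - g u⟫ ≤ 0 := fun u =>
    (norm_eq_iInf_iff_real_inner_le_zero hK (hgK u)).1 (hg u)
  refine ⟨g, ?_, hgK, fun x hx => ?_⟩
  · refine LipschitzWith.continuous (K := 1) (LipschitzWith.of_dist_le_mul fun x y => ?_)
    rw [dist_eq_norm, dist_eq_norm, NNReal.coe_one, one_mul]
    have h1 := hin x (g y) (hgK y)
    have h2 := hin y (g x) (hgK x)
    have h3 : ‖g x - g y‖ ^ 2 ≤ ⟪x - y, g x - g y⟫ := by
      rw [← real_inner_self_eq_norm_sq]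
      simp only [inner_sub_left, inner_sub_right] at h1 h2 ⊢
      linarith
    have h4 := real_inner_le_norm (x - y) (g x - g y)
    by_contra! h
    nlinarith [norm_nonneg (x - y)]
  · have h := hin x x hx
    rw [real_inner_self_nonpos, sub_eq_zero] at h
    exact h.symm

theorem Convex.isNbhdExtensor [InnerProductSpace ℝ E] [FiniteDimensional ℝ E] {K : Set E}
    (hc : IsClosed K) (hK : Convex ℝ K) : IsNbhdExtensor K := by
  rcases K.eq_empty_or_nonempty with rfl | hne
  · exact isNbhdExtensor_empty
  have : CompleteSpace E := FiniteDimensional.complete ℝ E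
  obtain ⟨ρ, hρc, hρK, hρ⟩ := exists_continuous_retraction_of_convex hne hc hK
  intro Z f hZ hf hm
  have : TietzeExtension E := RCLike.instTietzeExtensionTVS (𝕜 := ℝ)
  obtain ⟨g, hg⟩ := ContinuousMap.exists_restrict_eq hZ
    (⟨Z.domRestrict f, hf.domRestrict⟩ : C(Z, E))
  refine ⟨Set.univ, fun x => ρ (g x), isOpen_univ, Set.subset_univ _,
    (hρc.comp g.continuous).continuousOn, fun x _ => hρK _, fun x hx => ?_⟩
  have h : g x = f x := congrArg (fun k : C(Z, E) => k ⟨x, hx⟩) hg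
  simp only [h, hρ _ (hm hx)]

/-- Gluing: `A ∪ B` is a neighbourhood extensor if `A`, `B` and `A ∩ B` are. -/
theorem IsNbhdExtensor.union {A B : Set E} (hAc : IsClosed A) (hBc : IsClosed B)
    (hA : IsNbhdExtensor A) (hB : IsNbhdExtensor B) (hAB : IsNbhdExtensor (A ∩ B)) :
    IsNbhdExtensor (A ∪ B) := by
  intro Z f hZ hf hm
  set ZA := Z ∩ f ⁻¹' A with hZA
  set ZB := Z ∩ f ⁻¹' B with hZB
  have hZAc : IsClosed ZA := hf.preimage_isClosed_of_isClosed hZ hAc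
  have hZBc : IsClosed ZB := hf.preimage_isClosed_of_isClosed hZ hBc
  rcases ZA.eq_empty_or_nonempty with hAe | hAne
  · have hm' : Set.MapsTo f Z B := fun x hx =>
      (hm hx).resolve_left fun h => (hAe ▸ (⟨hx, h⟩ : x ∈ ZA) : x ∈ (∅ : Set E))
    obtain ⟨W, g, h1, h2, h3, h4, h5⟩ := hB Z f hZ hf hm'
    exact ⟨W, g, h1, h2, h3, fun x hx => Or.inr (h4 hx), h5⟩
  rcases ZB.eq_empty_or_nonempty with hBe | hBne
  · have hm' : Set.MapsTo f Z A := fun x hx =>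
      (hm hx).resolve_right fun h => (hBe ▸ (⟨hx, h⟩ : x ∈ ZB) : x ∈ (∅ : Set E))
    obtain ⟨W, g, h1, h2, h3, h4, h5⟩ := hA Z f hZ hf hm'
    exact ⟨W, g, h1, h2, h3, fun x hx => Or.inl (h4 hx), h5⟩
  have hcov : ∀ x ∈ Z, x ∈ ZA ∨ x ∈ ZB := fun x hx =>
    (hm hx).imp (fun h => ⟨hx, h⟩) (fun h => ⟨hx, h⟩)
  set α : E → ℝ := fun x => Metric.infDist x ZA
  set β : E → ℝ := fun x => Metric.infDist x ZB
  have hα : Continuous α := Metric.continuous_infDist_pt _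
  have hβ : Continuous β := Metric.continuous_infDist_pt _
  have hα0 : ∀ x, x ∈ ZA ↔ α x = 0 := fun x => hZAc.mem_iff_infDist_zero hAne
  have hβ0 : ∀ x, x ∈ ZB ↔ β x = 0 := fun x => hZBc.mem_iff_infDist_zero hBne
  have hαn : ∀ x, 0 ≤ α x := fun x => Metric.infDist_nonneg
  have hβn : ∀ x, 0 ≤ β x := fun x => Metric.infDist_nonneg
  obtain ⟨WC, gC, hWCo, hWCs, hgCc, hgCm, hgCe⟩ := hAB (ZA ∩ ZB) f (hZAc.inter hZBc)
    (hf.mono fun x hx => hx.1.1) fun x hx => ⟨hx.1.2, hx.2.2⟩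
  obtain ⟨V, hVo, hVs, hVc⟩ := normal_exists_closure_subset (hZAc.inter hZBc) hWCo hWCs
  set T := {x | α x = β x} ∩ closure V with hT
  have hTc : IsClosed T := (isClosed_eq hα hβ).inter isClosed_closure
  have hTZA : ∀ x ∈ T, x ∈ ZA → x ∈ ZA ∩ ZB := fun x hx hxA =>
    ⟨hxA, (hβ0 x).2 (hx.1 ▸ (hα0 x).1 hxA)⟩
  have hTZB : ∀ x ∈ T, x ∈ ZB → x ∈ ZA ∩ ZB := fun x hx hxB =>
    ⟨(hα0 x).2 (hx.1.trans ((hβ0 x).1 hxB)), hxB⟩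
  have glue : ∀ (Y C : Set E), IsClosed Y → ContinuousOn f Y → Set.MapsTo f Y C → A ∩ B ⊆ C →
      IsNbhdExtensor C → (∀ x ∈ T, x ∈ Y → x ∈ ZA ∩ ZB) →
      ∃ (W : Set E) (g : E → E), IsOpen W ∧ Y ⊆ W ∧ T ⊆ W ∧ ContinuousOn g W ∧
        Set.MapsTo g W C ∧ Set.EqOn g f Y ∧ Set.EqOn g gC T := by
    classical
    intro Y C hYc hYf hYm hC hCe hTY
    set k : E → E := fun x => if x ∈ T then gC x else f x with hk
    have hkT : Set.EqOn k gC T := fun x hx => if_pos hx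
    have hkY : Set.EqOn k f Y := fun x hx => by
      by_cases hxT : x ∈ T
      · rw [hkT hxT]; exact hgCe (hTY x hxT hx)
      · exact if_neg hxT
    have hgT : ContinuousOn gC T := hgCc.mono fun x hx => hVc hx.2
    have hkc : ContinuousOn k (Y ∪ T) :=
      (hYf.congr hkY).union_of_isClosed (hgT.congr hkT) hYc hTc
    have hkm : Set.MapsTo k (Y ∪ T) C := by
      rintro x (hx | hx)
      · rw [hkY hx]; exact hYm hx
      · rw [hkT hx]; exact hC (hgCm (hVc hx.2))
    obtain ⟨W, g, h1, h2, h3, h4, h5⟩ := hCe _ k (hYc.union hTc) hkc hkm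
    exact ⟨W, g, h1, fun x hx => h2 (Or.inl hx), fun x hx => h2 (Or.inr hx), h3, h4,
      fun x hx => (h5 (Or.inl hx)).trans (hkY hx), fun x hx => (h5 (Or.inr hx)).trans (hkT hx)⟩
  obtain ⟨WA, gA, hWAo, hZWA, hTWA, hgAc, hgAm, hgAf, hgAT⟩ := glue ZA A hZAc
    (hf.mono fun x hx => hx.1) (fun x hx => hx.2) Set.inter_subset_left hA hTZA
  obtain ⟨WB, gB, hWBo, hZWB, hTWB, hgBc, hgBm, hgBf, hgBT⟩ := glue ZB B hZBc
    (hf.mono fun x hx => hx.1) (fun x hx => hx.2) Set.inter_subset_right hB hTZB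
  classical
  set W : Set E := ({x | α x < β x} ∩ WA) ∪ ({x | β x < α x} ∩ WB) ∪ (WA ∩ WB ∩ V) with hW
  have hWT : ∀ x ∈ W, α x = β x → x ∈ T := by
    rintro x ((⟨h, _⟩ | ⟨h, _⟩) | h) he
    · exact absurd he (ne_of_lt h)
    · exact absurd he (ne_of_gt h)
    · exact ⟨he, subset_closure h.2⟩
  have hWA : ∀ x ∈ W, α x ≤ β x → x ∈ WA := by
    rintro x ((⟨_, h⟩ | ⟨h, _⟩) | h) he
    · exact h
    · exact absurd he (not_le.2 h)
    · exact h.1.1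
  have hWB : ∀ x ∈ W, β x ≤ α x → x ∈ WB := by
    rintro x ((⟨h, _⟩ | ⟨_, h⟩) | h) he
    · exact absurd he (not_le.2 h)
    · exact h
    · exact h.1.2
  set g : E → E := fun x => if α x ≤ β x then gA x else gB x with hg
  have hgB' : ∀ x ∈ W, β x ≤ α x → g x = gB x := by
    intro x hx h
    by_cases h' : α x ≤ β x
    · have hxT := hWT x hx (le_antisymm h' h)
      simp only [hg, if_pos h', hgAT hxT, hgBT hxT]
    · simp only [hg, if_neg h']
  refine ⟨W, g, ?_, ?_, ?_, ?_, ?_⟩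
  · exact (((isOpen_lt hα hβ).inter hWAo).union ((isOpen_lt hβ hα).inter hWBo)).union
      ((hWAo.inter hWBo).inter hVo)
  · intro x hx
    by_cases hxA : x ∈ ZA
    · by_cases hxB : x ∈ ZB
      · exact Or.inr ⟨⟨hZWA hxA, hZWB hxB⟩, hVs ⟨hxA, hxB⟩⟩
      · refine Or.inl (Or.inl ⟨?_, hZWA hxA⟩)
        have := (hα0 x).1 hxA
        change α x < β x
        rw [this]
        exact lt_of_le_of_ne (hβn x) fun h => hxB ((hβ0 x).2 h.symm)
    · have hxB := (hcov x hx).resolve_left hxA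
      refine Or.inl (Or.inr ⟨?_, hZWB hxB⟩)
      have := (hβ0 x).1 hxB
      change β x < α x
      rw [this]
      exact lt_of_le_of_ne (hαn x) fun h => hxA ((hα0 x).2 h.symm)
  · have hWu : W = (W ∩ {x | α x ≤ β x}) ∪ (W ∩ {x | β x ≤ α x}) := by
      rw [← Set.inter_union_distrib_left, Set.inter_eq_left.2]
      exact fun x _ => le_total (α x) (β x)
    have c1 : ContinuousOn g (W ∩ {x | α x ≤ β x}) :=
      (hgAc.mono fun x hx => hWA x hx.1 hx.2).congr fun x hx => if_pos hx.2
    have c2 : ContinuousOn g (W ∩ {x | β x ≤ α x}) :=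
      (hgBc.mono fun x hx => hWB x hx.1 hx.2).congr fun x hx => hgB' x hx.1 hx.2
    intro x hx
    have hcl1 : IsClosed {x | α x ≤ β x} := isClosed_le hα hβ
    have hcl2 : IsClosed {x | β x ≤ α x} := isClosed_le hβ hα
    rw [hWu]
    refine ContinuousWithinAt.union ?_ ?_
    · by_cases h : α x ≤ β x
      · exact c1 x ⟨hx, h⟩
      · exact continuousWithinAt_of_notMem_closure fun h' =>
          h (hcl1.closure_subset (closure_mono Set.inter_subset_right h'))
    · by_cases h : β x ≤ α x
      · exact c2 x ⟨hx, h⟩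
      · exact continuousWithinAt_of_notMem_closure fun h' =>
          h (hcl2.closure_subset (closure_mono Set.inter_subset_right h'))
  · intro x hx
    by_cases h : α x ≤ β x
    · simp only [hg, if_pos h]; exact Or.inl (hgAm (hWA x hx h))
    · simp only [hg, if_neg h]; exact Or.inr (hgBm (hWB x hx (not_le.1 h).le))
  · intro x hx
    by_cases hxA : x ∈ ZA
    · have h : α x ≤ β x := ((hα0 x).1 hxA).trans_le (hβn x)
      simp only [hg, if_pos h, hgAf hxA]
    · have hxB := (hcov x hx).resolve_left hxA
      have h : ¬ α x ≤ β x := by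
        rw [(hβ0 x).1 hxB]
        exact fun h => hxA ((hα0 x).2 (le_antisymm h (hαn x)))
      simp only [hg, if_neg h, hgBf hxB]

/-- Finite unions of closed convex sets are neighbourhood extensors. -/
theorem isNbhdExtensor_biUnion_convex [InnerProductSpace ℝ E] [FiniteDimensional ℝ E] {ι : Type*}
    (s : Finset ι) : ∀ K : ι → Set E, (∀ i, IsClosed (K i)) → (∀ i, Convex ℝ (K i)) →
    IsNbhdExtensor (⋃ i ∈ s, K i) := by
  classical
  induction s using Finset.induction_on with
  | empty => intro K _ _; simpa using isNbhdExtensor_empty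
  | insert a s _ ih =>
    intro K hKc hK
    rw [Finset.set_biUnion_insert]
    refine IsNbhdExtensor.union (hKc a) (s.finite_toSet.isClosed_biUnion fun i _ => hKc i)
      (Convex.isNbhdExtensor (hKc a) (hK a)) (ih K hKc hK) ?_
    rw [Set.inter_iUnion₂]
    exact ih (fun i => K a ∩ K i) (fun i => (hKc a).inter (hKc i)) fun i => (hK a).inter (hK i)

/-- A finite union of closed convex sets is a retract of one of its open neighbourhoods. -/
theorem exists_nbhd_retraction_iUnion_convex [InnerProductSpace ℝ E] [FiniteDimensional ℝ E]
    {ι : Type*} [Finite ι] (K : ι → Set E) (hKc : ∀ i, IsClosed (K i))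
    (hK : ∀ i, Convex ℝ (K i)) :
    ∃ (W : Set E) (g : E → E), IsOpen W ∧ (⋃ i, K i) ⊆ W ∧ ContinuousOn g W ∧
      Set.MapsTo g W (⋃ i, K i) ∧ ∀ x ∈ ⋃ i, K i, g x = x := by
  have := Fintype.ofFinite ι
  have h := isNbhdExtensor_biUnion_convex Finset.univ K hKc hK
  simp only [Finset.mem_univ, Set.iUnion_true] at h
  exact h _ id (isClosed_iUnion_of_finite hKc) continuousOn_id (Set.mapsTo_id _)

end NbhdExtensor

/-! ### Nowhere vanishing approximations on cubes -/

/-- A continuous map from an `m`-dimensional cube to a space of dimension greater than `m` can be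
uniformly approximated by continuous nowhere vanishing maps. -/
theorem exists_continuous_ne_zero_approx {m : ℕ} {F : Type*} [NormedAddCommGroup F]
    [NormedSpace ℝ F] [FiniteDimensional ℝ F] (hm : m < Module.finrank ℝ F)
    (γ : (Fin m → unitInterval) → F) (hγ : Continuous γ) {ε : ℝ} (hε : 0 < ε) :
    ∃ γ' : (Fin m → unitInterval) → F, Continuous γ' ∧ ∀ s, γ' s ≠ 0 ∧ ‖γ' s - γ s‖ ≤ ε := by
  let clamp : (Fin m → ℝ) → Fin m → unitInterval := fun x i =>
    Set.projIcc (0 : ℝ) 1 zero_le_one (x i)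
  have hclamp : Continuous clamp :=
    continuous_pi fun i => continuous_projIcc.comp (continuous_apply i)
  let incl : (Fin m → unitInterval) → Fin m → ℝ := fun s i => s i
  have hincl : Continuous incl :=
    continuous_pi fun i => continuous_subtype_val.comp (continuous_apply i)
  have hci : ∀ s, clamp (incl s) = s := fun s => funext fun i => Set.projIcc_val _ (s i)
  obtain ⟨g, hg, hgγ, -⟩ := (hγ.comp hclamp).exists_contDiff_approx 1
    (ε := fun _ => ε / 2) continuous_const fun _ => half_pos hε
  have hdense : Dense (Set.range g)ᶜ :=
    hg.dense_compl_range_of_finrank_lt_finrank (by simpa using hm)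
  obtain ⟨z, hzr, hz⟩ := Metric.dense_iff.1 hdense 0 (ε / 2) (half_pos hε)
  refine ⟨fun s => g (incl s) - z, (hg.continuous.comp hincl).sub continuous_const, fun s => ⟨?_, ?_⟩⟩
  · exact fun h => hz ⟨incl s, sub_eq_zero.1 h⟩
  · have h1 := hgγ (incl s)
    simp only [Function.comp_apply, hci, dist_eq_norm] at h1
    have h2 : ‖z‖ < ε / 2 := by simpa using hzr
    calc ‖g (incl s) - z - γ s‖ = ‖(g (incl s) - γ s) - z‖ := by congr 1; abel
      _ ≤ ‖g (incl s) - γ s‖ + ‖z‖ := norm_sub_le _ _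
      _ ≤ ε := by linarith

/-! ### Pushing families of points down a potential -/

section Push

variable {S E : Type*} [TopologicalSpace S] [NormedAddCommGroup E] [NormedSpace ℝ E]

/-- Near `x₀`, every continuous family `D` of points of `L` can be moved a distance at most `μ`
inside `L`, in a direction depending continuously on the parameter, such that the potential `Ψ`
drops by a definite amount at time `μ` and never increases by more than `e`. -/
def LocalPush (S : Type*) [TopologicalSpace S] (L : Set E) (Ψ : E → ℝ) (x₀ : E) (r : ℝ) : Prop :=
  ∀ μ : ℝ, 0 < μ → μ ≤ r → ∃ η : ℝ, 0 < η ∧ ∀ e : ℝ, 0 < e → ∀ D : S → E, Continuous D →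
    ∃ u : S → E, Continuous u ∧ ∀ s, ‖u s‖ ≤ 1 ∧
      (D s ∈ Metric.ball x₀ r → D s ∈ L → ∀ t : ℝ, 0 ≤ t → t ≤ μ →
        D s + t • u s ∈ L ∧ Ψ (D s + t • u s) ≤ Ψ (D s) + e ∧
        (t = μ → Ψ (D s + t • u s) ≤ Ψ (D s) - η))

theorem LocalPush.mono {L : Set E} {Ψ : E → ℝ} {x₀ : E} {r r' : ℝ} (h : LocalPush S L Ψ x₀ r)
    (hr : r' ≤ r) : LocalPush S L Ψ x₀ r' := by
  intro μ hμ hμr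
  obtain ⟨η, hη, H⟩ := h μ hμ (hμr.trans hr)
  refine ⟨η, hη, fun e he D hD => ?_⟩
  obtain ⟨u, hu, hus⟩ := H e he D hD
  exact ⟨u, hu, fun s => ⟨(hus s).1, fun hs => (hus s).2 (Metric.ball_subset_ball hr hs)⟩⟩

theorem Finset.exists_pos_forall_le {α : Type*} (t : Finset α) (f : α → ℝ)
    (hf : ∀ x ∈ t, 0 < f x) : ∃ η : ℝ, 0 < η ∧ ∀ x ∈ t, η ≤ f x := by
  have h : ∀ᶠ η in nhdsWithin (0 : ℝ) (Set.Ioi 0), ∀ x ∈ t, η ≤ f x :=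
    (Filter.eventually_all_finset t).2 fun x hx =>
      Filter.mem_of_superset (Ioc_mem_nhdsGT (hf x hx)) fun _ h => h.2
  obtain ⟨η, h1, h2⟩ := (h.and self_mem_nhdsWithin).exists
  exact ⟨η, h2, h1⟩

/-- Performing finitely many local pushes one after the other. -/
theorem exists_push_finset {L : Set E} {Ψ : E → ℝ} {r : E → ℝ} {μ η e : ℝ} (hμ : 0 < μ)
    (he : 0 ≤ e) (t : Finset E) (hr : ∀ x ∈ t, 0 < r x)
    (hpos : ∀ x ∈ t, ∀ y ∈ Metric.ball x (r x), 0 < Ψ y)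
    (hpush : ∀ x ∈ t, ∀ D : S → E, Continuous D → ∃ u : S → E, Continuous u ∧ ∀ s, ‖u s‖ ≤ 1 ∧
      (D s ∈ Metric.ball x (r x) → D s ∈ L → ∀ t : ℝ, 0 ≤ t → t ≤ μ →
        D s + t • u s ∈ L ∧ Ψ (D s + t • u s) ≤ Ψ (D s) + e ∧
        (t = μ → Ψ (D s + t • u s) ≤ Ψ (D s) - η)))
    (D : S → E) (hD : Continuous D) (hDL : ∀ s, D s ∈ L) :
    ∃ D' : S → E, Continuous D' ∧ ∀ s, D' s ∈ L ∧ (Ψ (D s) ≤ 0 → D' s = D s) ∧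
      dist (D' s) (D s) ≤ t.card * μ ∧ Ψ (D' s) ≤ Ψ (D s) + t.card * e ∧
      ∀ x ∈ t, dist (D s) x < r x / 2 - t.card * μ → Ψ (D' s) ≤ Ψ (D s) - η + t.card * e := by
  classical
  induction t using Finset.induction_on with
  | empty => exact ⟨D, hD, fun s => ⟨hDL s, fun _ => rfl, by simp, by simp, by simp⟩⟩
  | insert a t hat ih =>
    obtain ⟨D₁, hD₁, H⟩ := ih (fun x hx => hr x (Finset.mem_insert_of_mem hx))
      (fun x hx => hpos x (Finset.mem_insert_of_mem hx))
      (fun x hx => hpush x (Finset.mem_insert_of_mem hx))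
    obtain ⟨u, hu, hus⟩ := hpush a (Finset.mem_insert_self _ _) D₁ hD₁
    have hra := hr a (Finset.mem_insert_self _ _)
    set χ : S → ℝ := fun s => μ * max 0 (min 1 (2 - 2 * dist (D₁ s) a / r a)) with hχ
    have hχc : Continuous χ := by fun_prop
    have hχ0 : ∀ s, 0 ≤ χ s := fun s => mul_nonneg hμ.le (le_max_left _ _)
    have hχ1 : ∀ s, χ s ≤ μ := fun s =>
      mul_le_of_le_one_right hμ.le (max_le zero_le_one (min_le_left _ _))
    have hχout : ∀ s, D₁ s ∉ Metric.ball a (r a) → χ s = 0 := by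
      intro s hs
      have h1 : r a ≤ dist (D₁ s) a := by simpa using hs
      have h2 : 2 - 2 * dist (D₁ s) a / r a ≤ 0 := by
        rw [sub_nonpos, le_div_iff₀ hra]; linarith
      simp only [hχ]
      rw [max_eq_left ((min_le_right _ _).trans h2), mul_zero]
    have hχin : ∀ s, dist (D₁ s) a < r a / 2 → χ s = μ := by
      intro s hs
      have h2 : 1 ≤ 2 - 2 * dist (D₁ s) a / r a := by
        rw [le_sub_comm, div_le_iff₀ hra]; linarith
      simp only [hχ]
      rw [min_eq_left h2, max_eq_right zero_le_one, mul_one]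
    refine ⟨fun s => D₁ s + χ s • u s, hD₁.add (hχc.smul hu), fun s => ?_⟩
    obtain ⟨h1, h2, h3, h4, h5⟩ := H s
    have hcard : ((insert a t).card : ℝ) = t.card + 1 := by
      rw [Finset.card_insert_of_notMem hat]; push_cast; rfl
    rw [hcard]
    have hstep : D₁ s + χ s • u s ∈ L ∧ Ψ (D₁ s + χ s • u s) ≤ Ψ (D₁ s) + e := by
      by_cases hs : D₁ s ∈ Metric.ball a (r a)
      · have := (hus s).2 hs h1 (χ s) (hχ0 s) (hχ1 s)
        exact ⟨this.1, this.2.1⟩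
      · rw [hχout s hs, zero_smul, add_zero]
        exact ⟨h1, by linarith⟩
    have hdist : dist (D₁ s + χ s • u s) (D₁ s) ≤ μ := by
      rw [dist_eq_norm, add_sub_cancel_left, norm_smul, Real.norm_eq_abs, abs_of_nonneg (hχ0 s)]
      nlinarith [hχ1 s, hχ0 s, (hus s).1, norm_nonneg (u s)]
    refine ⟨hstep.1, fun h0 => ?_, ?_, by linarith [hstep.2], fun x hx hxs => ?_⟩
    · have hDs := h2 h0
      have hnot : D₁ s ∉ Metric.ball a (r a) := fun h =>
        absurd (hpos a (Finset.mem_insert_self _ _) _ h) (by rw [hDs]; exact not_lt.2 h0)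
      simp only [hχout s hnot, zero_smul, add_zero, hDs]
    · linarith [dist_triangle (D₁ s + χ s • u s) (D₁ s) (D s)]
    · rcases Finset.mem_insert.1 hx with rfl | hx
      · have hd : dist (D₁ s) x < r x / 2 := by
          have := dist_triangle (D₁ s) (D s) x
          nlinarith
        have := (hus s).2 (by rw [Metric.mem_ball]; linarith) h1 μ hμ.le le_rfl
        simp only [hχin s hd]
        linarith [this.2.2 rfl]
      · have := h5 x hx (by nlinarith)
        linarith [hstep.2]

theorem exists_push_round {L : Set E} (hL : IsCompact L) {Ψ : E → ℝ} (hΨ : Continuous Ψ)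
    (hpush : ∀ x ∈ L, 0 < Ψ x → ∃ r, 0 < r ∧ LocalPush S L Ψ x r) {δ : ℝ} (hδ : 0 < δ) :
    ∃ η : ℝ, 0 < η ∧ ∀ D : S → E, Continuous D → (∀ s, D s ∈ L) →
      ∃ D' : S → E, Continuous D' ∧ ∀ s, D' s ∈ L ∧ (Ψ (D s) ≤ 0 → D' s = D s) ∧
        Ψ (D' s) ≤ max (Ψ (D s) - η) δ := by
  classical
  have hpush' : ∀ x, ∃ r, 0 < r ∧ (x ∈ L → 0 < Ψ x → LocalPush S L Ψ x r ∧
      ∀ y ∈ Metric.ball x r, 0 < Ψ y) := by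
    intro x
    by_cases hx : x ∈ L ∧ 0 < Ψ x
    · obtain ⟨r₁, hr₁, h₁⟩ := hpush x hx.1 hx.2
      obtain ⟨r₂, hr₂, h₂⟩ := Metric.isOpen_iff.1 (isOpen_lt continuous_const hΨ) x hx.2
      exact ⟨min r₁ r₂, lt_min hr₁ hr₂, fun _ _ => ⟨h₁.mono (min_le_left _ _),
        fun y hy => h₂ (Metric.ball_subset_ball (min_le_right _ _) hy)⟩⟩
    · exact ⟨1, one_pos, fun h h' => absurd ⟨h, h'⟩ hx⟩
  choose r hr hrp using hpush'
  have hK : IsCompact (L ∩ {x | δ / 2 ≤ Ψ x}) :=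
    hL.inter_right (isClosed_le continuous_const hΨ)
  obtain ⟨t, htK, htc⟩ := hK.elim_nhds_subcover (fun x => Metric.ball x (r x / 4))
    fun x _ => Metric.ball_mem_nhds x (by have := hr x; positivity)
  have htp : ∀ x ∈ t, LocalPush S L Ψ x (r x) ∧ ∀ y ∈ Metric.ball x (r x), 0 < Ψ y := fun x hx =>
    hrp x (htK x hx).1 (lt_of_lt_of_le (half_pos hδ) (htK x hx).2)
  obtain ⟨ρ, hρ, hρr⟩ := t.exists_pos_forall_le r fun x _ => hr x
  have hN : (0 : ℝ) < t.card + 1 := by positivity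
  set μ : ℝ := ρ / (4 * (t.card + 1)) with hμdef
  have hμ : 0 < μ := by positivity
  have hNμ : t.card * μ ≤ ρ / 4 := by
    rw [hμdef, mul_div_assoc', div_le_div_iff₀ (by positivity) (by positivity)]
    nlinarith
  have hμρ : μ ≤ ρ := div_le_self hρ.le (by nlinarith [(Nat.cast_nonneg t.card : (0 : ℝ) ≤ _)])
  have hη' : ∀ x, ∃ η, 0 < η ∧ (x ∈ t → ∀ e : ℝ, 0 < e → ∀ D : S → E, Continuous D →
      ∃ u : S → E, Continuous u ∧ ∀ s, ‖u s‖ ≤ 1 ∧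
      (D s ∈ Metric.ball x (r x) → D s ∈ L → ∀ t : ℝ, 0 ≤ t → t ≤ μ →
        D s + t • u s ∈ L ∧ Ψ (D s + t • u s) ≤ Ψ (D s) + e ∧
        (t = μ → Ψ (D s + t • u s) ≤ Ψ (D s) - η))) := by
    intro x
    by_cases hx : x ∈ t
    · obtain ⟨η, hη, h⟩ := (htp x hx).1 μ hμ (hμρ.trans (hρr x hx))
      exact ⟨η, hη, fun _ => h⟩
    · exact ⟨1, one_pos, fun h => absurd h hx⟩
  choose η₀ hη₀ hη₀p using hη'
  obtain ⟨η₁, hη₁, hη₁le⟩ := t.exists_pos_forall_le η₀ fun x _ => hη₀ x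
  set η := min η₁ δ with hηdef
  have hη : 0 < η := lt_min hη₁ hδ
  set e := η / (2 * (t.card + 1)) with hedef
  have he : 0 < e := by positivity
  have hNe : t.card * e ≤ η / 2 := by
    rw [hedef, mul_div_assoc', div_le_div_iff₀ (by positivity) (by positivity)]
    nlinarith
  refine ⟨η / 2, half_pos hη, fun D hD hDL => ?_⟩
  obtain ⟨D', hD', H⟩ := exists_push_finset (η := η) hμ he.le t (fun x _ => hr x)
    (fun x hx => (htp x hx).2) (fun x hx D hD => by
      obtain ⟨u, hu, hus⟩ := hη₀p x hx e he D hD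
      refine ⟨u, hu, fun s => ⟨(hus s).1, fun h1 h2 τ h3 h4 => ?_⟩⟩
      obtain ⟨k1, k2, k3⟩ := (hus s).2 h1 h2 τ h3 h4
      exact ⟨k1, k2, fun h => (k3 h).trans
        (by linarith [(min_le_left η₁ δ).trans (hη₁le x hx)])⟩) D hD hDL
  refine ⟨D', hD', fun s => ?_⟩
  obtain ⟨h1, h2, -, h4, h5⟩ := H s
  refine ⟨h1, h2, ?_⟩
  by_cases hs : δ / 2 ≤ Ψ (D s)
  · obtain ⟨x, hx, hxs⟩ := Set.mem_iUnion₂.1 (htc ⟨hDL s, hs⟩)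
    have hlt : dist (D s) x < r x / 4 := hxs
    have := h5 x hx (by linarith [hρr x hx])
    exact le_max_of_le_left (by linarith)
  · exact le_max_of_le_right (by linarith [min_le_right η₁ δ])

/-- If every point of the compact set `L` with positive potential admits a local push, then every
continuous family of points of `L` can be pushed below any positive level of the potential, without
moving the points at level zero. -/
theorem exists_push_below {L : Set E} (hL : IsCompact L) {Ψ : E → ℝ} (hΨ : Continuous Ψ)
    (hpush : ∀ x ∈ L, 0 < Ψ x → ∃ r, 0 < r ∧ LocalPush S L Ψ x r) {δ : ℝ} (hδ : 0 < δ)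
    (D : S → E) (hD : Continuous D) (hDL : ∀ s, D s ∈ L) :
    ∃ D' : S → E, Continuous D' ∧ ∀ s, D' s ∈ L ∧ (Ψ (D s) ≤ 0 → D' s = D s) ∧ Ψ (D' s) ≤ δ := by
  obtain ⟨η, hη, H⟩ := exists_push_round hL hΨ hpush hδ
  obtain ⟨M, hM⟩ := hL.bddAbove_image hΨ.continuousOn
  have key : ∀ k : ℕ, ∃ D' : S → E, Continuous D' ∧ ∀ s, D' s ∈ L ∧ (Ψ (D s) ≤ 0 → D' s = D s) ∧
      Ψ (D' s) ≤ max (M - k * η) δ := by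
    intro k
    induction k with
    | zero =>
      refine ⟨D, hD, fun s => ⟨hDL s, fun _ => rfl, le_max_of_le_left ?_⟩⟩
      simpa using hM ⟨D s, hDL s, rfl⟩
    | succ k ih =>
      obtain ⟨D₁, hD₁, h₁⟩ := ih
      obtain ⟨D₂, hD₂, h₂⟩ := H D₁ hD₁ fun s => (h₁ s).1
      refine ⟨D₂, hD₂, fun s => ⟨(h₂ s).1, fun h0 => ?_, (h₂ s).2.2.trans ?_⟩⟩
      · have := (h₁ s).2.1 h0
        rw [(h₂ s).2.1 (by rw [this]; exact h0), this]
      · push_cast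
        refine max_le ?_ (le_max_right _ _)
        rcases le_max_iff.1 (h₁ s).2.2 with h | h
        · exact le_max_of_le_left (by linarith)
        · exact le_max_of_le_right (by linarith)
  obtain ⟨k, hk⟩ := exists_nat_gt (M / η)
  obtain ⟨D', hD', h⟩ := key k
  refine ⟨D', hD', fun s => ⟨(h s).1, (h s).2.1, (h s).2.2.trans (max_le ?_ le_rfl)⟩⟩
  rw [div_lt_iff₀ hη] at hk
  linarith

end Push

/-! ### Local pushes from first and second order information -/

section LocalPush

theorem le_of_hasDerivAt_nonpos {f f' : ℝ → ℝ} {t : ℝ} (ht : 0 ≤ t)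
    (hf : ∀ τ, 0 ≤ τ → τ ≤ t → HasDerivAt f (f' τ) τ) (hf' : ∀ τ, 0 ≤ τ → τ ≤ t → f' τ ≤ 0) :
    f t ≤ f 0 := by
  refine antitoneOn_of_deriv_nonpos (convex_Icc 0 t)
    (fun τ hτ => (hf τ hτ.1 hτ.2).continuousAt.continuousWithinAt) (fun τ hτ => ?_)
    (fun τ hτ => ?_) ⟨le_rfl, ht⟩ ⟨ht, le_rfl⟩ ht
  · have h := interior_subset hτ
    exact (hf τ h.1 h.2).differentiableAt.differentiableWithinAt
  · have h := interior_subset hτ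
    rw [(hf τ h.1 h.2).deriv]
    exact hf' τ h.1 h.2

variable {E : Type*} [NormedAddCommGroup E] [InnerProductSpace ℝ E]

theorem add_smul_mem_ball_two_mul {x₀ y u : E} {r t : ℝ} (hy : y ∈ Metric.ball x₀ r)
    (hu : ‖u‖ ≤ 1) (ht : 0 ≤ t) (htr : t ≤ r) : y + t • u ∈ Metric.ball x₀ (2 * r) := by
  rw [Metric.mem_ball, dist_eq_norm] at *
  have h1 : ‖t • u‖ ≤ t := by
    rw [norm_smul, Real.norm_eq_abs, abs_of_nonneg ht]
    exact mul_le_of_le_one_right ht hu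
  calc ‖y + t • u - x₀‖ = ‖(y - x₀) + t • u‖ := by congr 1; abel
    _ ≤ ‖y - x₀‖ + ‖t • u‖ := norm_add_le _ _
    _ < 2 * r := by linarith

theorem exists_localPush_of_inner_neg {S : Type*} [TopologicalSpace S] {Ψ : E → ℝ} {G : E → E}
    (hG : Continuous G)
    (hΨG : ∀ (y e : E) (t : ℝ), HasDerivAt (fun t : ℝ => Ψ (y + t • e)) ⟪G (y + t • e), e⟫ t)
    {x₀ v : E} {R : ℝ} (hv : ‖v‖ ≤ 1) (hGv : ⟪G x₀, v⟫ < 0) (hx : ‖x₀‖ < R ∨ ⟪x₀, v⟫ < 0) :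
    ∃ r, 0 < r ∧ LocalPush S (Metric.closedBall (0 : E) R) Ψ x₀ r := by
  set c : ℝ := -⟪G x₀, v⟫ / 2 with hc
  have hcpos : 0 < c := by rw [hc]; linarith
  have hGc : Continuous fun z => ⟪G z, v⟫ := hG.inner continuous_const
  have h1 : ∀ᶠ z in nhds x₀, ⟪G z, v⟫ < -c :=
    hGc.continuousAt.eventually_lt continuousAt_const (by rw [hc]; linarith)
  have h2 : ∀ᶠ z in nhds x₀, ‖z‖ < R ∨ ⟪z, v⟫ < 0 := by
    rcases hx with hx | hx
    · exact (continuous_norm.continuousAt.eventually_lt continuousAt_const hx).mono fun z => Or.inl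
    · have : Continuous fun z : E => ⟪z, v⟫ := continuous_id.inner continuous_const
      exact (this.continuousAt.eventually_lt continuousAt_const hx).mono fun z => Or.inr
  obtain ⟨ρ, hρ, H⟩ := Metric.eventually_nhds_iff_ball.1 (h1.and h2)
  refine ⟨ρ / 2, half_pos hρ, fun μ hμ hμr => ⟨c * μ, mul_pos hcpos hμ, fun e he D _ =>
    ⟨fun _ => v, continuous_const, fun s => ⟨hv, fun hs hsL t ht htμ => ?_⟩⟩⟩⟩
  have hmem : ∀ τ, 0 ≤ τ → τ ≤ t → D s + τ • v ∈ Metric.ball x₀ ρ := fun τ h0 hτ => by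
    have := add_smul_mem_ball_two_mul hs hv h0 (hτ.trans (htμ.trans hμr))
    rwa [mul_div_cancel₀ _ (two_ne_zero)] at this
  have hdec : Ψ (D s + t • v) ≤ Ψ (D s) - c * t := by
    have := le_of_hasDerivAt_nonpos (f := fun τ => Ψ (D s + τ • v) + c * τ)
      (f' := fun τ => ⟪G (D s + τ • v), v⟫ + c) ht
      (fun τ _ _ => (hΨG (D s) v τ).add (by simpa using (hasDerivAt_id τ).const_mul c))
      (fun τ h0 hτ => by linarith [(H _ (hmem τ h0 hτ)).1])
    simp only [zero_smul, add_zero, mul_zero] at this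
    linarith
  refine ⟨?_, by nlinarith, fun h => by rw [h] at hdec ⊢; exact hdec⟩
  rw [mem_closedBall_zero_iff] at hsL ⊢
  rcases (H _ (hmem t ht le_rfl)).2 with h | h
  · exact h.le
  · refine le_trans ?_ hsL
    have hsq : ‖D s‖ ^ 2 = ‖D s + t • v‖ ^ 2 - 2 * (t * ⟪D s + t • v, v⟫) + ‖t • v‖ ^ 2 := by
      rw [← inner_smul_right, ← norm_sub_sq_real, add_sub_cancel_right]
    refine le_of_sq_le_sq ?_ (norm_nonneg _)
    nlinarith [mul_nonneg ht (neg_nonneg.2 h.le), sq_nonneg ‖t • v‖]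

theorem exists_localPush_of_hessian_neg [FiniteDimensional ℝ E] {m : ℕ} {Ψ : E → ℝ} {G : E → E}
    {Q : E → E → ℝ} (hG : Continuous G) (hQ : Continuous fun z : E × E => Q z.1 z.2)
    (hΨG : ∀ (y e : E) (t : ℝ), HasDerivAt (fun t : ℝ => Ψ (y + t • e)) ⟪G (y + t • e), e⟫ t)
    (hGQ : ∀ (y e : E) (t : ℝ),
      HasDerivAt (fun t : ℝ => ⟪G (y + t • e), e⟫) (Q (y + t • e) e) t)
    {x₀ : E} {R : ℝ} (hx : ‖x₀‖ < R) (F : Submodule ℝ E) (hF : m < Module.finrank ℝ F)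
    (hneg : ∀ e ∈ F, e ≠ 0 → Q x₀ e < 0) :
    ∃ r, 0 < r ∧ LocalPush (Fin m → unitInterval) (Metric.closedBall (0 : E) R) Ψ x₀ r := by
  have hK : IsCompact ((F : Set E) ∩ Metric.sphere 0 1) :=
    (isCompact_sphere (0 : E) 1).inter_left F.closed_of_finiteDimensional
  have hFn : Nontrivial F := Module.nontrivial_of_finrank_pos (R := ℝ) (by omega)
  have hKne : ((F : Set E) ∩ Metric.sphere 0 1).Nonempty := by
    obtain ⟨w, hw⟩ := exists_norm_eq F (zero_le_one (α := ℝ))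
    exact ⟨w, w.2, by simpa using hw⟩
  have hQx : Continuous (Q x₀) := hQ.comp (continuous_const.prodMk continuous_id)
  obtain ⟨e₀, he₀, hmax⟩ := hK.exists_isMaxOn hKne hQx.continuousOn
  set κ : ℝ := -Q x₀ e₀ / 4 with hκ
  have hκpos : 0 < κ := by
    have := hneg e₀ he₀.1 (by rintro rfl; simpa using he₀.2)
    rw [hκ]; linarith
  have h1 : ∀ᶠ z in nhds x₀, ∀ e ∈ (F : Set E) ∩ Metric.sphere 0 1, Q z e < -(2 * κ) := by
    refine hK.eventually_forall_of_forall_eventually fun e he => ?_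
    refine hQ.continuousAt.eventually_lt continuousAt_const ?_
    have : Q x₀ e ≤ Q x₀ e₀ := hmax he
    change Q x₀ e < _
    linarith
  have h2 : ∀ᶠ z in nhds x₀, ‖z‖ < R :=
    continuous_norm.continuousAt.eventually_lt continuousAt_const hx
  obtain ⟨ρ, hρ, H⟩ := Metric.eventually_nhds_iff_ball.1 (h1.and h2)
  refine ⟨ρ / 2, half_pos hρ, fun μ hμ hμr => ⟨κ * μ ^ 2 / 2, by positivity, fun e he D hD => ?_⟩⟩
  set ε := min (e / μ) (κ * μ / 2) with hε
  have hεpos : 0 < ε := lt_min (by positivity) (by positivity)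
  obtain ⟨γ, hγ, hγs⟩ := exists_continuous_ne_zero_approx hF
    (fun s => F.orthogonalProjectionOnto (G (D s)))
    (F.orthogonalProjectionOnto.continuous.comp (hG.comp hD)) hεpos
  set u : (Fin m → unitInterval) → F := fun s => -(‖γ s‖⁻¹ • γ s) with hu
  have hucont : Continuous u :=
    ((hγ.norm.inv₀ fun s => norm_ne_zero_iff.2 (hγs s).1).smul hγ).neg
  have hunorm : ∀ s, ‖u s‖ = 1 := fun s => by
    rw [hu]
    simp only [norm_neg, norm_smul, norm_inv, norm_norm]
    exact inv_mul_cancel₀ (norm_ne_zero_iff.2 (hγs s).1)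
  refine ⟨fun s => u s, continuous_subtype_val.comp hucont, fun s =>
    ⟨(hunorm s).le, fun hs hsL t ht htμ => ?_⟩⟩
  have hu1 : ‖(u s : E)‖ ≤ 1 := (hunorm s).le
  have humem : (u s : E) ∈ (F : Set E) ∩ Metric.sphere 0 1 := ⟨(u s).2, by simpa using hunorm s⟩
  have hmem : ∀ τ, 0 ≤ τ → τ ≤ t → D s + τ • (u s : E) ∈ Metric.ball x₀ ρ := fun τ h0 hτ => by
    have := add_smul_mem_ball_two_mul hs hu1 h0 (hτ.trans (htμ.trans hμr))
    rwa [mul_div_cancel₀ _ (two_ne_zero)] at this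
  have hslope : ⟪G (D s), (u s : E)⟫ ≤ ε := by
    rw [← Submodule.inner_orthogonalProjectionOnto_eq_of_mem_right]
    have h3 : ⟪γ s, u s⟫ ≤ 0 := by
      simp only [hu, inner_neg_right, real_inner_smul_right, real_inner_self_eq_norm_sq]
      have := norm_nonneg (γ s)
      exact neg_nonpos.2 (by positivity)
    have h4 : ⟪F.orthogonalProjectionOnto (G (D s)) - γ s, u s⟫ ≤ ε := by
      refine (real_inner_le_norm _ _).trans ?_
      rw [hunorm, mul_one, norm_sub_rev]
      exact (hγs s).2
    rw [inner_sub_left] at h4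
    linarith
  have hder : ∀ τ, 0 ≤ τ → τ ≤ t →
      ⟪G (D s + τ • (u s : E)), (u s : E)⟫ ≤ ⟪G (D s), (u s : E)⟫ - 2 * κ * τ := by
    intro τ h0 hτ
    have := le_of_hasDerivAt_nonpos
      (f := fun τ => ⟪G (D s + τ • (u s : E)), (u s : E)⟫ + 2 * κ * τ)
      (f' := fun τ => Q (D s + τ • (u s : E)) (u s) + 2 * κ) h0
      (fun σ _ _ => (hGQ (D s) (u s) σ).add
        (by simpa using (hasDerivAt_id σ).const_mul (2 * κ)))
      (fun σ k0 hσ => by linarith [(H _ (hmem σ k0 (hσ.trans hτ))).1 _ humem])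
    simp only [zero_smul, add_zero, mul_zero] at this
    linarith
  have hdec : Ψ (D s + t • (u s : E)) ≤ Ψ (D s) + ε * t - κ * t ^ 2 := by
    have := le_of_hasDerivAt_nonpos
      (f := fun τ => Ψ (D s + τ • (u s : E)) - ε * τ + κ * τ ^ 2)
      (f' := fun τ => ⟪G (D s + τ • (u s : E)), (u s : E)⟫ - ε + κ * (2 * τ)) ht
      (fun τ _ _ => ((hΨG (D s) (u s) τ).sub
        (by simpa using (hasDerivAt_id τ).const_mul ε)).add
          (by simpa using (hasDerivAt_pow 2 τ).const_mul κ))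
      (fun τ h0 hτ => by linarith [hder τ h0 hτ])
    simp only [zero_smul, add_zero, mul_zero] at this
    simp at this
    linarith
  have hεe : ε * μ ≤ e := by
    rw [← le_div_iff₀ hμ]; exact min_le_left _ _
  have hεκ : ε ≤ κ * μ / 2 := min_le_right _ _
  refine ⟨?_, ?_, ?_⟩
  · rw [mem_closedBall_zero_iff]
    exact (H _ (hmem t ht le_rfl)).2.le
  · nlinarith [mul_nonneg hκpos.le (sq_nonneg t)]
  · rintro rfl
    nlinarith

end LocalPush

/-! ### Vectors in general position -/

section GeneralPosition

variable {I E : Type*} [NormedAddCommGroup E] [InnerProductSpace ℝ E]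

/-- A family of vectors is in general position if all subfamilies of cardinality at most the
dimension of the space are linearly independent. -/
def GeneralPosition (v : I → E) : Prop :=
  ∀ T : Finset I, T.card ≤ Module.finrank ℝ E → LinearIndepOn ℝ v (T : Set I)

theorem GeneralPosition.eq_zero_of_orthogonal [Fintype I] [FiniteDimensional ℝ E] {v : I → E}
    (hv : GeneralPosition v) {w : I → ℝ} (hw : w ≠ 0) (hsum : ∑ i, w i • v i = 0) {x : E}
    (hx : ∀ i, w i ≠ 0 → ⟪v i, x⟫ = 0) : x = 0 := by
  classical
  set T : Finset I := Finset.univ.filter fun i => w i ≠ 0 with hT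
  have hTw : ∀ i, i ∈ T ↔ w i ≠ 0 := fun i => by simp [hT]
  rcases le_or_gt T.card (Module.finrank ℝ E) with h | h
  · refine absurd (funext fun i => ?_) hw
    have hli := linearIndepOn_finset_iff.1 (hv T h) w (by
      rw [← hsum]
      refine Finset.sum_subset (Finset.subset_univ _) fun i _ hi => ?_
      rw [hTw, not_not] at hi
      rw [hi, zero_smul])
    by_contra hi
    exact hi (hli i ((hTw i).2 hi))
  · obtain ⟨T', hT'T, hT'card⟩ := Finset.exists_subset_card_eq h.le
    have hli : LinearIndependent ℝ fun i : T' => v i := hv T' hT'card.le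
    have hspan := hli.span_eq_top_of_card_eq_finrank' (by simpa using hT'card)
    have hmem : x ∈ (Submodule.span ℝ (Set.range fun i : T' => v i))ᗮ := by
      rw [Submodule.mem_orthogonal]
      intro u hu
      induction hu using Submodule.span_induction with
      | mem u hu =>
        obtain ⟨i, rfl⟩ := hu
        exact hx _ ((hTw _).1 (hT'T i.2))
      | zero => exact inner_zero_left _
      | add a b _ _ ha hb => rw [inner_add_left, ha, hb, add_zero]
      | smul c a _ ha => rw [real_inner_smul_left, ha, mul_zero]
    rwa [hspan, Submodule.top_orthogonal_eq_bot, Submodule.mem_bot] at hmem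

/-- Far away from the origin, a nontrivial nonnegative combination of vectors in general position,
all of which have inner product bounded below with the point `x`, does not point towards the
origin. -/
theorem GeneralPosition.exists_sum_ne_neg_smul [Fintype I] [FiniteDimensional ℝ E] {v : I → E}
    (hv : GeneralPosition v) {C : ℝ} (hC : 0 ≤ C) :
    ∃ R : ℝ, ∀ x : E, R ≤ ‖x‖ → ∀ w : I → ℝ, (∀ i, 0 ≤ w i) → w ≠ 0 →
      (∀ i, w i ≠ 0 → -C ≤ ⟪v i, x⟫) → ∀ κ : ℝ, 0 ≤ κ → ∑ i, w i • v i ≠ -(κ • x) := by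
  classical
  set A : E × (I → ℝ) → E := fun z => ∑ i, z.2 i • v i with hA
  have hAc : Continuous A := by fun_prop
  set k : E × (I → ℝ) → ℝ := fun z => -⟪A z, z.1⟫ with hk
  have hkc : Continuous k := (hAc.inner continuous_fst).neg
  set K : Set (E × (I → ℝ)) := (Metric.sphere 0 1 ×ˢ stdSimplex ℝ I) ∩
    ({z | A z + k z • z.1 = 0} ∩ {z | 0 ≤ k z}) with hK
  have hKc : IsCompact K := ((isCompact_sphere _ _).prod (isCompact_stdSimplex ℝ I)).inter_right
    ((isClosed_eq (hAc.add (hkc.smul continuous_fst)) continuous_const).inter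
      (isClosed_le continuous_const hkc))
  set φ : E × (I → ℝ) → ℝ := fun z => ∑ i, max 0 (-(z.2 i * ⟪v i, z.1⟫)) with hφ
  have hφc : Continuous φ := by fun_prop
  have hφpos : ∀ z ∈ K, 0 < φ z := by
    rintro ⟨ω, w⟩ ⟨⟨hω, hw⟩, hz, hkz⟩
    have hsum1 : ∑ i, w i = 1 := hw.2
    refine lt_of_le_of_ne (Finset.sum_nonneg fun i _ => le_max_left _ _) fun h0 => ?_
    have h1 : ∀ i, 0 ≤ w i * ⟪v i, ω⟫ := fun i => by
      have := (Finset.sum_eq_zero_iff_of_nonneg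
        (fun i _ => le_max_left (0 : ℝ) (-(w i * ⟪v i, ω⟫)))).1 h0.symm i (Finset.mem_univ i)
      linarith [le_max_right (0 : ℝ) (-(w i * ⟪v i, ω⟫))]
    have h2 : ∑ i, w i * ⟪v i, ω⟫ = -k (ω, w) := by
      simp only [hk, hA, sum_inner, real_inner_smul_left, neg_neg]
    have hkz' : 0 ≤ k (ω, w) := hkz
    have h3 : ∑ i, w i * ⟪v i, ω⟫ = 0 :=
      le_antisymm (by linarith) (Finset.sum_nonneg fun i _ => h1 i)
    have h4 := (Finset.sum_eq_zero_iff_of_nonneg fun i _ => h1 i).1 h3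
    have hk0 : k (ω, w) = 0 := by linarith
    have hA0 : A (ω, w) = 0 := by
      have : A (ω, w) + k (ω, w) • ω = 0 := hz
      rwa [hk0, zero_smul, add_zero] at this
    have hω0 : ω = 0 := hv.eq_zero_of_orthogonal (w := w) (by rintro rfl; simp at hsum1) hA0
      fun i hi => (mul_eq_zero.1 (h4 i (Finset.mem_univ i))).resolve_left hi
    rw [hω0] at hω
    simp at hω
  obtain ⟨a, ha, haK⟩ := hKc.exists_forall_le' hφc.continuousOn hφpos
  refine ⟨C / a + 1, fun x hx w hw hw0 hwx κ hκ heq => ?_⟩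
  have hCa : 0 ≤ C / a := div_nonneg hC ha.le
  have hxpos : 0 < ‖x‖ := by linarith
  have hspos : 0 < ∑ i, w i := by
    obtain ⟨i, hi⟩ := Function.ne_iff.1 hw0
    exact Finset.sum_pos' (fun i _ => hw i)
      ⟨i, Finset.mem_univ i, lt_of_le_of_ne (hw i) (Ne.symm hi)⟩
  set s := ∑ i, w i with hs
  set ω : E := ‖x‖⁻¹ • x with hω
  set w' : I → ℝ := fun i => s⁻¹ * w i with hw'
  have hωn : ‖ω‖ = 1 := by
    rw [hω, norm_smul, norm_inv, norm_norm, inv_mul_cancel₀ hxpos.ne']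
  have hw'sum : ∑ i, w' i = 1 := by
    rw [hw', ← Finset.mul_sum, inv_mul_cancel₀ hspos.ne']
  have hxω : x = ‖x‖ • ω := by rw [hω, smul_smul, mul_inv_cancel₀ hxpos.ne', one_smul]
  have hAω : A (ω, w') = -((s⁻¹ * κ * ‖x‖) • ω) := by
    simp only [hA, hw', mul_smul]
    rw [← Finset.smul_sum, heq, smul_neg, ← hxω]
  have hkω : k (ω, w') = s⁻¹ * κ * ‖x‖ := by
    simp only [hk]
    rw [hAω, inner_neg_left, real_inner_smul_left, real_inner_self_eq_norm_sq, hωn]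
    ring
  have hmem : (ω, w') ∈ K := by
    refine ⟨⟨by simpa using hωn, fun i => by simp only [hw']; have := hw i; positivity,
      hw'sum⟩, ?_, ?_⟩
    · change A (ω, w') + k (ω, w') • ω = 0
      rw [hAω, hkω, neg_add_cancel]
    · change 0 ≤ k (ω, w')
      rw [hkω]; positivity
  have h1 := haK _ hmem
  have h2 : φ (ω, w') ≤ ∑ i, w' i * (C / ‖x‖) := by
    refine Finset.sum_le_sum fun i _ => ?_
    have hw'i : 0 ≤ w' i := by simp only [hw']; have := hw i; positivity
    refine max_le (by positivity) ?_
    by_cases hi : w i = 0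
    · simp [hw', hi]
    · have h3 : -(C / ‖x‖) ≤ ⟪v i, ω⟫ := by
        rw [hω, real_inner_smul_right, ← neg_div, div_eq_inv_mul]
        exact mul_le_mul_of_nonneg_left (hwx i hi) (by positivity)
      change -(w' i * ⟪v i, ω⟫) ≤ _
      nlinarith
  rw [← Finset.sum_mul, hw'sum, one_mul] at h2
  have h3 : a * ‖x‖ ≤ C := by
    rw [← le_div_iff₀ hxpos]; exact h1.trans h2
  have h4 : C < a * ‖x‖ := by
    have : C / a < ‖x‖ := by linarith
    rwa [div_lt_iff₀' ha] at this
  linarith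

end GeneralPosition

/-! ### The potential of a coloured family of affine functions -/

theorem hasDerivAt_max_zero_sq (s : ℝ) :
    HasDerivAt (fun s : ℝ => max s 0 ^ 2) (2 * max s 0) s := by
  rcases lt_trichotomy s 0 with hs | rfl | hs
  · have h : (fun s : ℝ => max s 0 ^ 2) =ᶠ[nhds s] fun _ => 0 := by
      filter_upwards [Iio_mem_nhds hs] with x hx
      rw [max_eq_right (le_of_lt hx)]; norm_num
    rw [max_eq_right hs.le, mul_zero]
    exact (hasDerivAt_const s (0 : ℝ)).congr_of_eventuallyEq h
  · have h : (fun s : ℝ => max s 0 ^ 2) =O[nhds 0] fun s : ℝ => ‖s - 0‖ ^ 2 := by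
      refine Asymptotics.IsBigO.of_bound 1 (Filter.Eventually.of_forall fun x => ?_)
      rw [sub_zero, one_mul, norm_pow, norm_pow, norm_norm]
      refine pow_le_pow_left₀ (norm_nonneg _) ?_ 2
      rw [Real.norm_eq_abs, Real.norm_eq_abs, abs_of_nonneg (le_max_right x 0)]
      exact max_le (le_abs_self x) (abs_nonneg x)
    simpa using (h.hasFDerivAt one_lt_two).hasDerivAt
  · have h : (fun s : ℝ => max s 0 ^ 2) =ᶠ[nhds s] fun s => s ^ 2 := by
      filter_upwards [Ioi_mem_nhds hs] with x hx
      rw [max_eq_left (le_of_lt hx)]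
    rw [max_eq_left hs.le]
    exact (by simpa using hasDerivAt_pow 2 s : HasDerivAt (fun s : ℝ => s ^ 2) (2 * s) s)
      |>.congr_of_eventuallyEq h

theorem hasDerivAt_max_zero_cube (s : ℝ) :
    HasDerivAt (fun s : ℝ => max s 0 ^ 3) (3 * max s 0 ^ 2) s := by
  have h : ∀ s : ℝ, max s 0 ^ 2 * s = max s 0 ^ 3 := fun s => by
    rcases le_total s 0 with hs | hs
    · rw [max_eq_right hs]; norm_num
    · rw [max_eq_left hs]; ring
  have hd := (hasDerivAt_max_zero_sq s).mul (hasDerivAt_id s)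
  simp only [id, mul_one] at hd
  refine (hd.congr_deriv ?_).congr_of_eventuallyEq (Filter.Eventually.of_forall fun s => (h s).symm)
  rcases le_total s 0 with hs | hs
  · rw [max_eq_right hs]; norm_num
  · rw [max_eq_left hs]; ring

namespace Arrangement

variable {A J E : Type*} [NormedAddCommGroup E] [InnerProductSpace ℝ E]

/-- The affine function `x ↦ (⟪b_a, x⟫ + α_a) - (⟪b_b, x⟫ + α_b)`, where `q a = (b_a, α_a)`. -/
def gap (q : A → E × ℝ) (a b : A) (x : E) : ℝ :=
  ⟪(q a).1 - (q b).1, x⟫ + ((q a).2 - (q b).2)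

theorem continuous_gap (q : A → E × ℝ) (a b : A) : Continuous (gap q a b) := by
  unfold gap; fun_prop

theorem gap_swap (q : A → E × ℝ) (a b : A) (x : E) : gap q b a x = -gap q a b x := by
  simp only [gap, inner_sub_left]; ring

theorem hasDerivAt_gap (q : A → E × ℝ) (a b : A) (y e : E) (t : ℝ) :
    HasDerivAt (fun t : ℝ => gap q a b (y + t • e)) ⟪(q a).1 - (q b).1, e⟫ t := by
  have h : (fun t : ℝ => gap q a b (y + t • e)) =
      fun t => t * ⟪(q a).1 - (q b).1, e⟫ + gap q a b y := by
    funext t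
    simp only [gap, inner_add_right, real_inner_smul_right]; ring
  rw [h]
  simpa using ((hasDerivAt_id t).mul_const ⟪(q a).1 - (q b).1, e⟫).add_const (gap q a b y)

theorem hasDerivAt_exp_gap (q : A → E × ℝ) (β : ℝ) (a b : A) (y e : E) (t : ℝ) :
    HasDerivAt (fun t : ℝ => Real.exp (-β * gap q a b (y + t • e)))
      (-(β * Real.exp (-β * gap q a b (y + t • e)) * ⟪(q a).1 - (q b).1, e⟫)) t := by
  refine ((hasDerivAt_gap q a b y e t).const_mul (-β)).exp.congr_deriv ?_
  ring

/-- The points at which, in every colour, no affine function strictly dominates all others. -/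
def tieLocus (col : A → J) (q : A → E × ℝ) : Set E :=
  {x | ∀ a, ∃ b, col b = col a ∧ b ≠ a ∧ gap q a b x ≤ 0}

/-- Genericity of a coloured family: for every choice of one member of each colour, the differences
of the linear parts of the chosen members with the other members of the same colour are in general
position. -/
def Generic (col : A → J) (q : A → E × ℝ) : Prop :=
  ∀ c : J → A, (∀ j, col (c j) = j) →
    GeneralPosition fun b : {b // b ≠ c (col b)} => (q (c (col b))).1 - (q b).1

variable [Fintype A] [DecidableEq A] [DecidableEq J]

/-- The other members of the same colour. -/
def rivals (col : A → J) (a : A) : Finset A := {b | col b = col a ∧ b ≠ a}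

theorem mem_rivals {col : A → J} {a b : A} : b ∈ rivals col a ↔ col b = col a ∧ b ≠ a := by
  simp [rivals]

/-- A smooth function which can only be positive where `a` strictly dominates its rivals. -/
noncomputable def bump (col : A → J) (q : A → E × ℝ) (β : ℝ) (a : A) (x : E) : ℝ :=
  1 - ∑ b ∈ rivals col a, Real.exp (-β * gap q a b x)

/-- The gradient of `bump`. -/
noncomputable def bumpGrad (col : A → J) (q : A → E × ℝ) (β : ℝ) (a : A) (x : E) : E :=
  ∑ b ∈ rivals col a, (β * Real.exp (-β * gap q a b x)) • ((q a).1 - (q b).1)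

/-- The potential, which is positive only if some member strictly dominates its rivals. -/
noncomputable def pot (col : A → J) (q : A → E × ℝ) (β : ℝ) (x : E) : ℝ :=
  ∑ a, max (bump col q β a x) 0 ^ 3

/-- The gradient of `pot`. -/
noncomputable def grad (col : A → J) (q : A → E × ℝ) (β : ℝ) (x : E) : E :=
  ∑ a, (3 * max (bump col q β a x) 0 ^ 2) • bumpGrad col q β a x

/-- The second derivative of `pot` at `x` in the direction `e`. -/
noncomputable def hess (col : A → J) (q : A → E × ℝ) (β : ℝ) (x e : E) : ℝ :=
  ∑ a, (6 * max (bump col q β a x) 0 * ⟪bumpGrad col q β a x, e⟫ ^ 2 +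
    3 * max (bump col q β a x) 0 ^ 2 * -∑ b ∈ rivals col a,
      β ^ 2 * Real.exp (-β * gap q a b x) * ⟪(q a).1 - (q b).1, e⟫ ^ 2)

variable {col : A → J} {q : A → E × ℝ} {β : ℝ}

theorem continuous_bump (a : A) : Continuous (bump col q β a) := by
  have := continuous_gap q a
  unfold bump; fun_prop

theorem continuous_bumpGrad (a : A) : Continuous (bumpGrad col q β a) := by
  have := continuous_gap q a
  unfold bumpGrad; fun_prop

theorem continuous_pot : Continuous (pot col q β) := by
  have := fun a => continuous_bump (col := col) (q := q) (β := β) a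
  unfold pot; fun_prop

theorem continuous_grad : Continuous (grad col q β) := by
  have := fun a => continuous_bump (col := col) (q := q) (β := β) a
  have := fun a => continuous_bumpGrad (col := col) (q := q) (β := β) a
  unfold grad; fun_prop

theorem continuous_hess : Continuous fun z : E × E => hess col q β z.1 z.2 := by
  have := fun a => continuous_bump (col := col) (q := q) (β := β) a
  have := fun a => continuous_bumpGrad (col := col) (q := q) (β := β) a
  have := fun a b => continuous_gap q a b
  unfold hess; fun_prop

theorem hasDerivAt_bump (a : A) (y e : E) (t : ℝ) :
    HasDerivAt (fun t : ℝ => bump col q β a (y + t • e)) ⟪bumpGrad col q β a (y + t • e), e⟫ t := by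
  refine ((HasDerivAt.fun_sum fun b _ => hasDerivAt_exp_gap q β a b y e t).const_sub 1).congr_deriv ?_
  simp only [bumpGrad, sum_inner, real_inner_smul_left, Finset.sum_neg_distrib, neg_neg]

theorem hasDerivAt_inner_bumpGrad (a : A) (y e : E) (t : ℝ) :
    HasDerivAt (fun t : ℝ => ⟪bumpGrad col q β a (y + t • e), e⟫)
      (-∑ b ∈ rivals col a,
        β ^ 2 * Real.exp (-β * gap q a b (y + t • e)) * ⟪(q a).1 - (q b).1, e⟫ ^ 2) t := by
  simp only [bumpGrad, sum_inner, real_inner_smul_left]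
  rw [← Finset.sum_neg_distrib]
  refine HasDerivAt.fun_sum fun b _ =>
    (((hasDerivAt_exp_gap q β a b y e t).const_mul β).mul_const _).congr_deriv ?_
  ring

theorem hasDerivAt_pot (y e : E) (t : ℝ) :
    HasDerivAt (fun t : ℝ => pot col q β (y + t • e)) ⟪grad col q β (y + t • e), e⟫ t := by
  refine (HasDerivAt.fun_sum fun a _ =>
    (hasDerivAt_max_zero_cube _).comp t (hasDerivAt_bump a y e t)).congr_deriv ?_
  simp only [grad, sum_inner, real_inner_smul_left]

theorem hasDerivAt_inner_grad (y e : E) (t : ℝ) :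
    HasDerivAt (fun t : ℝ => ⟪grad col q β (y + t • e), e⟫) (hess col q β (y + t • e) e) t := by
  simp only [grad, sum_inner, real_inner_smul_left]
  refine HasDerivAt.fun_sum fun a _ => ((((hasDerivAt_max_zero_sq _).comp t
    (hasDerivAt_bump a y e t)).const_mul 3).mul
    (hasDerivAt_inner_bumpGrad a y e t)).congr_deriv ?_
  simp only [Function.comp_apply]
  ring

theorem gap_pos_of_bump_pos (hβ : 0 < β) {a b : A} {x : E} (h : 0 < bump col q β a x)
    (hb : b ∈ rivals col a) : 0 < gap q a b x := by
  have h1 : Real.exp (-β * gap q a b x) ≤ ∑ b ∈ rivals col a, Real.exp (-β * gap q a b x) :=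
    Finset.single_le_sum (f := fun b => Real.exp (-β * gap q a b x))
      (fun b _ => (Real.exp_pos _).le) hb
  have h2 : Real.exp (-β * gap q a b x) < 1 := by
    unfold bump at h; linarith
  rw [Real.exp_lt_one_iff] at h2
  by_contra! h3
  nlinarith

theorem eq_of_bump_pos (hβ : 0 < β) {a b : A} {x : E} (ha : 0 < bump col q β a x)
    (hb : 0 < bump col q β b x) (hab : col a = col b) : a = b := by
  by_contra hne
  have h1 := gap_pos_of_bump_pos hβ ha (mem_rivals.2 ⟨hab.symm, Ne.symm hne⟩)
  have h2 := gap_pos_of_bump_pos hβ hb (mem_rivals.2 ⟨hab, hne⟩)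
  rw [gap_swap] at h2
  linarith

theorem pot_eq_zero_of_mem_tieLocus (hβ : 0 < β) {x : E} (hx : x ∈ tieLocus col q) :
    pot col q β x = 0 := by
  refine Finset.sum_eq_zero fun a _ => ?_
  obtain ⟨b, hb1, hb2, hb3⟩ := hx a
  have : bump col q β a x ≤ 0 := by
    by_contra! h
    exact absurd (gap_pos_of_bump_pos hβ h (mem_rivals.2 ⟨hb1, hb2⟩)) (not_lt.2 hb3)
  rw [max_eq_right this]; norm_num

theorem exists_bump_pos {x : E} (hx : 0 < pot col q β x) : ∃ a, 0 < bump col q β a x := by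
  by_contra! h
  refine hx.ne' (Finset.sum_eq_zero fun a _ => ?_)
  rw [max_eq_right (h a)]; norm_num

/-- Some choice of one member of each colour selects all members with positive bump function. -/
theorem exists_transversal (hβ : 0 < β) (hcol : Function.Surjective col) (x : E) :
    ∃ c : J → A, (∀ j, col (c j) = j) ∧ ∀ a, 0 < bump col q β a x → c (col a) = a := by
  have h : ∀ j, ∃ a, col a = j ∧ ∀ b, 0 < bump col q β b x → col b = j → a = b := by
    intro j
    by_cases hj : ∃ b, 0 < bump col q β b x ∧ col b = j
    · obtain ⟨a, ha, haj⟩ := hj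
      exact ⟨a, haj, fun b hb hbj => eq_of_bump_pos hβ ha hb (haj.trans hbj.symm)⟩
    · obtain ⟨a, ha⟩ := hcol j
      exact ⟨a, ha, fun b hb hbj => absurd ⟨b, hb, hbj⟩ hj⟩
  choose c hc1 hc2 using h
  exact ⟨c, hc1, fun a ha => hc2 _ a ha rfl⟩

theorem sum_rivals_eq_sum_subtype {M : Type*} [AddCommMonoid M] {P : A → Prop} {c : J → A}
    (hc : ∀ j, col (c j) = j) (hcP : ∀ a, P a → c (col a) = a) (f : A → A → M)
    (hf : ∀ a b, ¬ P a → f a b = 0) :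
    ∑ a, ∑ b ∈ rivals col a, f a b =
      ∑ b : {b // b ≠ c (col b)}, f (c (col b)) b := by
  classical
  have h1 : ∀ b, (∑ a, if b ∈ rivals col a then f a b else 0) =
      if b ≠ c (col b) then f (c (col b)) b else 0 := by
    intro b
    rw [Finset.sum_eq_single (c (col b))]
    · have : b ∈ rivals col (c (col b)) ↔ b ≠ c (col b) := by
        rw [mem_rivals, hc]; exact and_iff_right rfl
      simp only [this]
    · intro a _ ha
      by_cases hP : P a
      · rw [if_neg]
        intro hb
        exact ha (by rw [(mem_rivals.1 hb).1, hcP a hP])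
      · rw [hf a b hP, ite_self]
    · exact fun h => absurd (Finset.mem_univ _) h
  calc ∑ a, ∑ b ∈ rivals col a, f a b = ∑ a, ∑ b, if b ∈ rivals col a then f a b else 0 := by
        refine Finset.sum_congr rfl fun a _ => ?_
        rw [Finset.sum_ite_mem, Finset.univ_inter]
    _ = ∑ b, if b ≠ c (col b) then f (c (col b)) b else 0 := by
        rw [Finset.sum_comm]
        exact Finset.sum_congr rfl fun b _ => h1 b
    _ = _ := by
        rw [← Finset.sum_filter]
        exact (Finset.sum_subtype _ (by simp) fun b => f (c (col b)) b)

end Arrangement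

namespace Arrangement

/-- The tie locus is a retract of a neighbourhood. -/
theorem exists_nbhd_retraction_tieLocus {A J E : Type*} [Finite A] [NormedAddCommGroup E]
    [InnerProductSpace ℝ E] [FiniteDimensional ℝ E] (col : A → J) (q : A → E × ℝ) :
    ∃ (W : Set E) (g : E → E), IsOpen W ∧ tieLocus col q ⊆ W ∧ ContinuousOn g W ∧
      Set.MapsTo g W (tieLocus col q) ∧ ∀ x ∈ tieLocus col q, g x = x := by
  set K : (A → A) → Set E := fun f =>
    ⋂ a, {x | (col (f a) = col a ∧ f a ≠ a) ∧ gap q a (f a) x ≤ 0} with hK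
  have hKX : (⋃ f, K f) = tieLocus col q := by
    ext x
    simp only [hK, Set.mem_iUnion, Set.mem_iInter]
    constructor
    · rintro ⟨f, hf⟩ a
      exact ⟨f a, (hf a).1.1, (hf a).1.2, (hf a).2⟩
    · intro hx
      choose f h1 h2 h3 using hx
      exact ⟨f, fun a => ⟨⟨h1 a, h2 a⟩, h3 a⟩⟩
  rw [← hKX]
  refine exists_nbhd_retraction_iUnion_convex K (fun f => ?_) fun f => ?_
  · exact isClosed_iInter fun a =>
      (isClosed_const (p := col (f a) = col a ∧ f a ≠ a)).inter
        (isClosed_le (continuous_gap q a (f a)) continuous_const)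
  · refine convex_iInter fun a x hx y hy s t hs ht hst => ⟨hx.1, ?_⟩
    have h1 : gap q a (f a) (s • x + t • y) =
        s * gap q a (f a) x + t * gap q a (f a) y := by
      simp only [gap, inner_add_right, real_inner_smul_right]
      linear_combination (-((q a).2 - (q (f a)).2)) * hst
    rw [h1]
    have h2 : gap q a (f a) x ≤ 0 := hx.2
    have h3 : gap q a (f a) y ≤ 0 := hy.2
    nlinarith

variable {A J E : Type*} [NormedAddCommGroup E] [InnerProductSpace ℝ E] [Fintype A] [DecidableEq A]
  [DecidableEq J] {col : A → J} {q : A → E × ℝ} {β : ℝ}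

/-- At a point of positive potential, the gradient is a nontrivial nonnegative combination of
differences as in `Generic`, and the second derivative in directions orthogonal to the gradients of
the positive bump functions is a negative weighted sum of squares with the same weights. -/
theorem exists_weights (hβ : 0 < β) (hcol : Function.Surjective col)
    (hriv : ∀ a, (rivals col a).Nonempty) {x : E} (hx : 0 < pot col q β x) :
    ∃ c : J → A, (∀ j, col (c j) = j) ∧ ∃ w : {b // b ≠ c (col b)} → ℝ,
      (∀ b, 0 ≤ w b) ∧ w ≠ 0 ∧ (∀ b, w b ≠ 0 → 0 < gap q (c (col b)) b x) ∧
      grad col q β x = ∑ b, w b • ((q (c (col b))).1 - (q b).1) ∧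
      ∀ e, (∀ a, 0 < bump col q β a x → ⟪bumpGrad col q β a x, e⟫ = 0) →
        hess col q β x e = -(β * ∑ b, w b * ⟪(q (c (col b))).1 - (q b).1, e⟫ ^ 2) := by
  obtain ⟨c, hc, hcb⟩ := exists_transversal (q := q) hβ hcol x
  set ω : A → A → ℝ := fun a b =>
    3 * max (bump col q β a x) 0 ^ 2 * (β * Real.exp (-β * gap q a b x)) with hω
  have hω0 : ∀ a b, ¬ 0 < bump col q β a x → ω a b = 0 := fun a b h => by
    simp only [hω, max_eq_right (not_lt.1 h)]; ring
  have hωpos : ∀ a b, 0 < bump col q β a x → 0 < ω a b := fun a b h => by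
    simp only [hω, max_eq_left h.le]; positivity
  have hbump : ∀ a b, ω a b ≠ 0 → 0 < bump col q β a x := fun a b h => by
    by_contra h'; exact h (hω0 a b h')
  refine ⟨c, hc, fun b => ω (c (col b)) b, fun b => ?_, ?_, fun b hb => ?_, ?_, fun e he => ?_⟩
  · simp only [hω]; positivity
  · obtain ⟨a, ha⟩ := exists_bump_pos hx
    obtain ⟨b, hb⟩ := hriv a
    obtain ⟨hb1, hb2⟩ := mem_rivals.1 hb
    have hca : c (col b) = a := by rw [hb1, hcb a ha]
    refine Function.ne_iff.2 ⟨⟨b, by rw [hca]; exact hb2⟩, ?_⟩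
    simp only [hca]
    exact (hωpos a b ha).ne'
  · exact gap_pos_of_bump_pos hβ (hbump _ _ hb) (mem_rivals.2 ⟨(hc _).symm, b.2⟩)
  · rw [← sum_rivals_eq_sum_subtype (P := fun a => 0 < bump col q β a x) hc hcb
      (fun a b => ω a b • ((q a).1 - (q b).1)) fun a b h => by rw [hω0 a b h, zero_smul]]
    simp only [grad, bumpGrad, Finset.smul_sum, smul_smul, hω]
  · rw [← sum_rivals_eq_sum_subtype (P := fun a => 0 < bump col q β a x) hc hcb
      (fun a b => ω a b * ⟪(q a).1 - (q b).1, e⟫ ^ 2) fun a b h => by rw [hω0 a b h, zero_mul],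
      Finset.mul_sum, ← Finset.sum_neg_distrib]
    refine Finset.sum_congr rfl fun a _ => ?_
    have h1 : 6 * max (bump col q β a x) 0 * ⟪bumpGrad col q β a x, e⟫ ^ 2 = 0 := by
      by_cases ha : 0 < bump col q β a x
      · rw [he a ha]; ring
      · rw [max_eq_right (not_lt.1 ha)]; ring
    rw [h1, zero_add, mul_neg, Finset.mul_sum, Finset.mul_sum, neg_inj]
    refine Finset.sum_congr rfl fun b _ => ?_
    simp only [hω]; ring

theorem exists_pot_ge_of_isCompact [Nonempty A] (hriv : ∀ a, (rivals col a).Nonempty) {K : Set E}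
    (hK : IsCompact K) (hKX : Disjoint K (tieLocus col q)) :
    ∃ β : ℝ, 0 < β ∧ ∀ x ∈ K, 1 / 8 ≤ pot col q β x := by
  set h : E → ℝ := fun x => Finset.univ.sup' Finset.univ_nonempty fun a =>
    (rivals col a).inf' (hriv a) fun b => gap q a b x with hh
  have hc : Continuous h := Continuous.finset_sup'_apply _ fun a _ =>
    Continuous.finset_inf'_apply _ fun b _ => continuous_gap q a b
  have hpos : ∀ x ∈ K, 0 < h x := by
    intro x hx
    have hx' : x ∉ tieLocus col q := Set.disjoint_left.1 hKX hx
    simp only [tieLocus, Set.mem_ofPred_eq, not_forall, not_exists, not_and, not_le] at hx'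
    obtain ⟨a, ha⟩ := hx'
    refine (Finset.lt_sup'_iff _).2 ⟨a, Finset.mem_univ a, (Finset.lt_inf'_iff _).2 fun b hb => ?_⟩
    exact ha b (mem_rivals.1 hb).1 (mem_rivals.1 hb).2
  obtain ⟨α, hα, hαK⟩ := hK.exists_forall_le' hc.continuousOn hpos
  set N : ℝ := (Fintype.card A : ℝ) with hN
  have hNpos : 0 < N := by simp only [hN]; exact_mod_cast Fintype.card_pos
  refine ⟨2 * N / α, by positivity, fun x hx => ?_⟩
  obtain ⟨a, -, ha⟩ := (Finset.le_sup'_iff _).1 (hαK x hx)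
  have hexp : ∀ b ∈ rivals col a, Real.exp (-(2 * N / α) * gap q a b x) ≤ (2 * N + 1)⁻¹ := by
    intro b hb
    have h1 : α ≤ gap q a b x := (Finset.le_inf'_iff _ _).1 ha b hb
    have h2 : -(2 * N / α) * gap q a b x ≤ -(2 * N) := by
      have h3 : 2 * N / α * α ≤ 2 * N / α * gap q a b x :=
        mul_le_mul_of_nonneg_left h1 (by positivity)
      rw [div_mul_cancel₀ _ hα.ne'] at h3
      linarith
    refine (Real.exp_le_exp.2 h2).trans ?_
    rw [Real.exp_neg]
    exact inv_anti₀ (by positivity) (Real.add_one_le_exp _)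
  have hsum : ∑ b ∈ rivals col a, Real.exp (-(2 * N / α) * gap q a b x) ≤ 1 / 2 := by
    refine (Finset.sum_le_card_nsmul _ _ _ hexp).trans ?_
    have h4 : ((rivals col a).card : ℝ) ≤ N := by
      simp only [hN]; exact_mod_cast Finset.card_le_univ _
    rw [nsmul_eq_mul, ← div_eq_mul_inv, div_le_iff₀ (by positivity)]
    linarith
  have hbump : 1 / 2 ≤ max (bump col q (2 * N / α) a x) 0 :=
    le_max_of_le_left (by unfold bump; linarith)
  calc (1 / 8 : ℝ) = (1 / 2) ^ 3 := by norm_num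
    _ ≤ max (bump col q (2 * N / α) a x) 0 ^ 3 := pow_le_pow_left₀ (by norm_num) hbump 3
    _ ≤ pot col q (2 * N / α) x :=
      Finset.single_le_sum (f := fun a => max (bump col q (2 * N / α) a x) 0 ^ 3)
        (fun a _ => by positivity) (Finset.mem_univ a)

variable [FiniteDimensional ℝ E]

/-- Far away from the origin, the gradient of the potential does not point to the origin. -/
theorem Generic.exists_grad_ne [Finite J] (hq : Generic col q) (hcol : Function.Surjective col)
    (hriv : ∀ a, (rivals col a).Nonempty) :
    ∃ R : ℝ, ∀ β : ℝ, 0 < β → ∀ x : E, R ≤ ‖x‖ → 0 < pot col q β x → ∀ κ : ℝ, 0 ≤ κ →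
      grad col q β x ≠ -(κ • x) := by
  have := Fintype.ofFinite J
  set C : ℝ := ∑ a, ∑ b, |(q a).2 - (q b).2| with hC
  have hC0 : 0 ≤ C := Finset.sum_nonneg fun a _ => Finset.sum_nonneg fun b _ => abs_nonneg _
  have hCab : ∀ a b, (q a).2 - (q b).2 ≤ C := fun a b => (le_abs_self _).trans <|
    (Finset.single_le_sum (f := fun b => |(q a).2 - (q b).2|) (fun _ _ => abs_nonneg _)
      (Finset.mem_univ b)).trans
    (Finset.single_le_sum (f := fun a => ∑ b, |(q a).2 - (q b).2|)
      (fun _ _ => Finset.sum_nonneg fun _ _ => abs_nonneg _) (Finset.mem_univ a))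
  have h : ∀ c : J → A, ∃ R : ℝ, (∀ j, col (c j) = j) → ∀ x : E, R ≤ ‖x‖ →
      ∀ w : {b // b ≠ c (col b)} → ℝ, (∀ i, 0 ≤ w i) → w ≠ 0 →
      (∀ b, w b ≠ 0 → -C ≤ ⟪(q (c (col b))).1 - (q b).1, x⟫) → ∀ κ : ℝ, 0 ≤ κ →
        ∑ b, w b • ((q (c (col b))).1 - (q b).1) ≠ -(κ • x) := by
    intro c
    by_cases hc : ∀ j, col (c j) = j
    · obtain ⟨R, hR⟩ := (hq c hc).exists_sum_ne_neg_smul hC0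
      exact ⟨R, fun _ => hR⟩
    · exact ⟨0, fun h => absurd h hc⟩
  choose R hR using h
  obtain ⟨R', hR'⟩ := (Set.finite_range R).bddAbove
  refine ⟨R', fun β hβ x hx hpot κ hκ => ?_⟩
  obtain ⟨c, hc, w, hw, hw0, hwx, hgrad, -⟩ := exists_weights hβ hcol hriv hpot
  rw [hgrad]
  refine hR c hc x ((hR' ⟨c, rfl⟩).trans hx) w hw hw0 (fun b hb => ?_) κ hκ
  have h1 := hwx b hb
  simp only [gap] at h1
  linarith [hCab (c (col b)) b]

/-- At a critical point of positive potential, the second derivative is negative definite on a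
subspace of large dimension. -/
theorem Generic.exists_hess_neg [Fintype J] (hβ : 0 < β) (hq : Generic col q)
    (hcol : Function.Surjective col) (hriv : ∀ a, (rivals col a).Nonempty) {x : E}
    (hx : 0 < pot col q β x) (hgrad : grad col q β x = 0) :
    ∃ F : Submodule ℝ E, Module.finrank ℝ E < Module.finrank ℝ F + Fintype.card J ∧
      ∀ e ∈ F, e ≠ 0 → hess col q β x e < 0 := by
  set T := {a // 0 < bump col q β a x} with hT
  set g : T → E := fun a => bumpGrad col q β a x with hg
  set V := Submodule.span ℝ (Set.range g) with hV
  refine ⟨Vᗮ, ?_, fun e he he0 => ?_⟩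
  · have hcard : Fintype.card T ≤ Fintype.card J :=
      Fintype.card_le_of_injective (fun a : T => col a) fun a b hab =>
        Subtype.ext (eq_of_bump_pos hβ a.2 b.2 hab)
    have hdep : ¬ LinearIndependent ℝ g := by
      intro hli
      obtain ⟨a, ha⟩ := exists_bump_pos hx
      have hsum : ∑ a : T, (3 * max (bump col q β a x) 0 ^ 2) • g a = 0 := by
        rw [← hgrad, grad]
        have h := Finset.sum_subtype (F := (inferInstance : Fintype T))
          (Finset.univ.filter fun a => 0 < bump col q β a x) (by simp)
          fun a => (3 * max (bump col q β a x) 0 ^ 2) • bumpGrad col q β a x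
        rw [← h]
        refine Finset.sum_subset (Finset.subset_univ _) fun a _ ha => ?_
        have ha' : bump col q β a x ≤ 0 := by simpa using ha
        rw [max_eq_right ha']; simp
      have h0 := Fintype.linearIndependent_iff.1 hli _ hsum ⟨a, ha⟩
      simp only [max_eq_left ha.le] at h0
      have : 0 < 3 * bump col q β a x ^ 2 := by positivity
      linarith
    rw [linearIndependent_iff_card_le_finrank_span, not_le] at hdep
    have h1 := Submodule.finrank_add_finrank_orthogonal V
    have h2 : Module.finrank ℝ V < Fintype.card T := hdep
    omega
  · obtain ⟨c, hc, w, hw, hw0, -, hgr, hhess⟩ := exists_weights hβ hcol hriv hx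
    rw [hhess e fun a ha => (Submodule.mem_orthogonal _ _).1 he _
      (Submodule.subset_span ⟨⟨a, ha⟩, rfl⟩)]
    have hnn : ∀ b, 0 ≤ w b * ⟪(q (c (col b))).1 - (q b).1, e⟫ ^ 2 := fun b =>
      mul_nonneg (hw b) (sq_nonneg _)
    rw [neg_lt_zero]
    refine mul_pos hβ (lt_of_le_of_ne (Finset.sum_nonneg fun b _ => hnn b) fun h0 => he0 ?_)
    refine (hq c hc).eq_zero_of_orthogonal hw0 (hgr.symm.trans hgrad) fun b hb => ?_
    have := (Finset.sum_eq_zero_iff_of_nonneg fun b _ => hnn b).1 h0.symm b (Finset.mem_univ b)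
    simpa [hb] using this

theorem Generic.exists_localPush [Fintype J] {m : ℕ} (hq : Generic col q)
    (hcol : Function.Surjective col) (hriv : ∀ a, (rivals col a).Nonempty)
    (hm : m + Fintype.card J ≤ Module.finrank ℝ E) :
    ∃ R : ℝ, ∀ R' : ℝ, R ≤ R' → 0 < R' → ∀ β : ℝ, 0 < β → ∀ x ∈ Metric.closedBall (0 : E) R',
      0 < pot col q β x → ∃ r, 0 < r ∧
        LocalPush (Fin m → unitInterval) (Metric.closedBall (0 : E) R') (pot col q β) x r := by
  obtain ⟨R, hR⟩ := hq.exists_grad_ne hcol hriv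
  refine ⟨R, fun R' hRR' hR' β hβ x hx hpot => ?_⟩
  rw [mem_closedBall_zero_iff] at hx
  by_cases hg : grad col q β x = 0
  · rcases hx.lt_or_eq with hlt | heq
    · obtain ⟨F, hF, hneg⟩ := hq.exists_hess_neg hβ hcol hriv hpot hg
      exact exists_localPush_of_hessian_neg continuous_grad continuous_hess hasDerivAt_pot
        hasDerivAt_inner_grad hlt F (by omega) hneg
    · exact absurd (by simpa using hg) (hR β hβ x (hRR'.trans heq.ge) hpot 0 le_rfl)
  set g := grad col q β x with hgdef
  have hgn : 0 < ‖g‖ := norm_pos_iff.2 hg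
  rcases hx.lt_or_eq with hlt | heq
  · refine exists_localPush_of_inner_neg continuous_grad hasDerivAt_pot
      (v := -(‖g‖⁻¹ • g)) ?_ ?_ (Or.inl hlt)
    · rw [norm_neg, norm_smul, norm_inv, norm_norm, inv_mul_cancel₀ hgn.ne']
    · rw [← hgdef, inner_neg_right, real_inner_smul_right, real_inner_self_eq_norm_sq, neg_lt_zero]
      positivity
  · have hxn : 0 < ‖x‖ := heq ▸ hR'
    set g' := ‖g‖⁻¹ • g with hg'
    set x' := ‖x‖⁻¹ • x with hx'
    have hg'n : ‖g'‖ = 1 := by rw [hg', norm_smul, norm_inv, norm_norm, inv_mul_cancel₀ hgn.ne']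
    have hx'n : ‖x'‖ = 1 := by rw [hx', norm_smul, norm_inv, norm_norm, inv_mul_cancel₀ hxn.ne']
    have hgg' : g = ‖g‖ • g' := by rw [hg', smul_smul, mul_inv_cancel₀ hgn.ne', one_smul]
    have hxx' : x = ‖x‖ • x' := by rw [hx', smul_smul, mul_inv_cancel₀ hxn.ne', one_smul]
    have hne : g' + x' ≠ 0 := by
      intro h0
      refine hR β hβ x (hRR'.trans heq.ge) hpot (‖g‖ * ‖x‖⁻¹) (by positivity) ?_
      rw [← hgdef, mul_smul, ← hx', ← smul_neg, ← eq_neg_of_add_eq_zero_left h0, ← hgg']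
    have hin : 0 < 1 + ⟪g', x'⟫ := by
      have h1 : 0 < ‖g' + x'‖ ^ 2 := by have := norm_pos_iff.2 hne; positivity
      rw [norm_add_sq_real, hg'n, hx'n] at h1
      linarith
    refine exists_localPush_of_inner_neg continuous_grad hasDerivAt_pot
      (v := -((1 / 2 : ℝ) • (g' + x'))) ?_ ?_ (Or.inr ?_)
    · rw [norm_neg, norm_smul]
      have := norm_add_le g' x'
      rw [hg'n, hx'n] at this
      norm_num
      linarith
    · have : ⟪g, -((1 / 2 : ℝ) • (g' + x'))⟫ = -(‖g‖ * ((1 + ⟪g', x'⟫) / 2)) := by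
        conv_lhs => rw [hgg']
        rw [inner_neg_right, real_inner_smul_left, real_inner_smul_right, inner_add_right,
          real_inner_self_eq_norm_sq, hg'n]
        ring
      rw [← hgdef, this, neg_lt_zero]
      positivity
    · have : ⟪x, -((1 / 2 : ℝ) • (g' + x'))⟫ = -(‖x‖ * ((1 + ⟪g', x'⟫) / 2)) := by
        conv_lhs => rw [hxx']
        rw [inner_neg_right, real_inner_smul_left, real_inner_smul_right, inner_add_right,
          real_inner_self_eq_norm_sq, hx'n, real_inner_comm g' x']
        ring
      rw [this, neg_lt_zero]
      positivity

/-- Any continuous map from a cube of small dimension can be deformed into the tie locus of a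
generic coloured family, without moving the points already there. -/
theorem Generic.exists_map_tieLocus [Fintype J] [Nonempty A] {m : ℕ} (hq : Generic col q)
    (hcol : Function.Surjective col) (hriv : ∀ a, (rivals col a).Nonempty)
    (hm : m + Fintype.card J ≤ Module.finrank ℝ E) (D : (Fin m → unitInterval) → E)
    (hD : Continuous D) :
    ∃ D' : (Fin m → unitInterval) → E, Continuous D' ∧
      ∀ s, D' s ∈ tieLocus col q ∧ (D s ∈ tieLocus col q → D' s = D s) := by
  obtain ⟨W, g, hW, hXW, hgc, hgm, hgX⟩ := exists_nbhd_retraction_tieLocus col q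
  obtain ⟨R, hR⟩ := hq.exists_localPush hcol hriv hm
  obtain ⟨M, hM⟩ := (isCompact_range hD.norm).bddAbove
  set R' : ℝ := max (max R M) 1 with hR'
  have hDL : ∀ s, D s ∈ Metric.closedBall (0 : E) R' := fun s => by
    rw [mem_closedBall_zero_iff]
    exact (hM ⟨s, rfl⟩).trans ((le_max_right _ _).trans (le_max_left _ _))
  have hL : IsCompact (Metric.closedBall (0 : E) R') := isCompact_closedBall _ _
  obtain ⟨β, hβ, hβK⟩ := exists_pot_ge_of_isCompact (q := q) hriv (hL.diff hW)
    (Set.disjoint_left.2 fun x hx hxX => hx.2 (hXW hxX))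
  obtain ⟨D₁, hD₁, h₁⟩ := exists_push_below hL (continuous_pot (col := col) (q := q) (β := β))
    (hR R' ((le_max_left _ _).trans (le_max_left _ _)) (by positivity) β hβ)
    (by norm_num : (0 : ℝ) < 1 / 16) D hD hDL
  have hD₁W : ∀ s, D₁ s ∈ W := fun s => by
    by_contra h
    have h2 := hβK _ ⟨(h₁ s).1, h⟩
    have h3 := (h₁ s).2.2
    linarith
  refine ⟨fun s => g (D₁ s), hgc.comp_continuous hD₁ hD₁W, fun s => ⟨hgm (hD₁W s), fun hs => ?_⟩⟩
  have h2 := (h₁ s).2.1 (pot_eq_zero_of_mem_tieLocus hβ hs).le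
  simp only [h2]
  exact hgX _ hs

end Arrangement

/-! ### Connectivity from maps of cubes -/

/-- If every continuous map from a cube of dimension at most `M + 1` can be replaced by one with
values in `X` without changing the values that lie in `X` already, then `X` is `M`-connected. -/
theorem spaceMConnected_of_exists_map {E : Type*} [NormedAddCommGroup E] [NormedSpace ℝ E]
    {X : Set E} {M : ℕ}
    (h : ∀ m ≤ M + 1, ∀ D : (Fin m → unitInterval) → E, Continuous D →
      ∃ D' : (Fin m → unitInterval) → E, Continuous D' ∧
        ∀ s, D' s ∈ X ∧ (D s ∈ X → D' s = D s)) : SpaceMConnected M X := by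
  have hne : Nonempty X := by
    obtain ⟨D', -, hD'⟩ := h 0 (Nat.zero_le _) (fun _ => 0) continuous_const
    exact ⟨⟨_, (hD' default).1⟩⟩
  refine ⟨hne, ⟨hne, fun x y => ?_⟩, fun k _ hk y => ?_⟩
  · obtain ⟨D', hD'c, hD'⟩ := h 1 (by omega)
      (fun s => (1 - (s 0 : ℝ)) • (x : E) + (s 0 : ℝ) • (y : E)) (by fun_prop)
    refine ⟨⟨⟨fun t => ⟨D' fun _ => t, (hD' _).1⟩, ?_⟩, ?_, ?_⟩⟩
    · exact Continuous.subtype_mk (hD'c.comp (continuous_pi fun _ => continuous_id)) _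
    · refine Subtype.ext (((hD' fun _ => 0).2 ?_).trans ?_) <;> simp
    · refine Subtype.ext (((hD' fun _ => 1).2 ?_).trans ?_) <;> simp
  · suffices H : ∀ f : GenLoop (Fin k) X y, GenLoop.Homotopic f GenLoop.const by
      refine ⟨fun a b => ?_⟩
      induction a using Quotient.inductionOn with | _ f =>
      induction b using Quotient.inductionOn with | _ g =>
      exact Quotient.sound ((H f).trans (H g).symm)
    intro f
    obtain ⟨D', hD'c, hD'⟩ := h (k + 1) (by omega)
      (fun s => (1 - (s 0 : ℝ)) • (f (Fin.tail s) : E) + (s 0 : ℝ) • (y : E)) (by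
        have h1 : Continuous fun s : Fin (k + 1) → unitInterval => (f (Fin.tail s) : E) :=
          continuous_subtype_val.comp (f.1.continuous.comp
            (continuous_pi fun i => continuous_apply (Fin.succ i)))
        fun_prop)
    have hcons : Continuous fun z : unitInterval × (Fin k → unitInterval) =>
        (Fin.cons z.1 z.2 : Fin (k + 1) → unitInterval) :=
      continuous_pi fun i => by
        refine Fin.cases ?_ (fun i => ?_) i
        · simpa using continuous_fst
        · exact (continuous_apply i).comp continuous_snd
    refine ⟨⟨⟨⟨fun z => ⟨D' (Fin.cons z.1 z.2), (hD' _).1⟩, ?_⟩, fun s => ?_, fun s => ?_⟩,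
      fun t s hs => ?_⟩⟩
    · exact Continuous.subtype_mk (hD'c.comp hcons) _
    · refine Subtype.ext (((hD' (Fin.cons 0 s)).2 ?_).trans ?_) <;> simp
    · refine Subtype.ext (((hD' (Fin.cons 1 s)).2 ?_).trans ?_) <;> simp
    · have hfs : f s = y := f.2 s hs
      have heq : (1 - (t : ℝ)) • (y : E) + (t : ℝ) • (y : E) = y := by
        rw [← add_smul, sub_add_cancel, one_smul]
      refine Subtype.ext (((hD' (Fin.cons t s)).2 ?_).trans ?_)
      · simp [hfs, heq]
      · change _ = (f s : E)
        simp [hfs, heq]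

/-! ### Genericity holds almost everywhere -/

section AlmostEverywhere

theorem finite_setOf_not_linearIndependent_add_smul {T E : Type*} [Finite T] [AddCommGroup E]
    [Module ℝ E] {u : T → E} (hu : LinearIndependent ℝ u) (v : T → E) :
    {t : ℝ | ¬ LinearIndependent ℝ (v + t • u)}.Finite := by
  classical
  have := Fintype.ofFinite T
  obtain ⟨φ, hφ⟩ := (Fintype.linearCombination ℝ u).exists_leftInverse_of_injective
    (LinearMap.ker_eq_bot.2 <| linearIndependent_iff_injective_fintypeLinearCombination.1 hu)
  have hφu : ∀ i, φ (u i) = Pi.single i 1 := fun i => by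
    have := LinearMap.congr_fun hφ (Pi.single i 1)
    simpa using this
  set M : Matrix T T ℝ := -Matrix.of fun i => φ (v i) with hM
  refine (M.charpoly.roots.toFinset.finite_toSet).subset fun t ht => ?_
  rw [Finset.mem_coe, Multiset.mem_toFinset, Polynomial.mem_roots M.charpoly_monic.ne_zero,
    Polynomial.IsRoot.def, Matrix.eval_charpoly]
  by_contra hdet
  refine ht (LinearIndependent.of_comp φ ?_)
  have heq : φ ∘ (v + t • u) = fun i => (Matrix.scalar T t - M) i := by
    funext i k
    simp only [Function.comp_apply, Pi.add_apply, Pi.smul_apply, map_add, map_smul, hφu, hM,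
      Matrix.sub_apply, Matrix.neg_apply, Matrix.of_apply, Matrix.scalar_apply,
      Matrix.diagonal_apply, Pi.single_apply, smul_eq_mul]
    split_ifs <;> simp_all [add_comm]
  rw [heq]
  exact Matrix.linearIndependent_rows_of_det_ne_zero hdet

/-- A linear family of tuples of vectors which is linearly independent for one parameter is linearly
independent for almost every parameter. -/
theorem ae_linearIndependent {T E P : Type*} [Finite T] [NormedAddCommGroup E] [NormedSpace ℝ E]
    [NormedAddCommGroup P] [NormedSpace ℝ P] [FiniteDimensional ℝ P] [MeasurableSpace P]
    [BorelSpace P] (ν : Measure P) [ν.IsAddHaarMeasure] (V : P →L[ℝ] T → E) {p₀ : P}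
    (hp₀ : LinearIndependent ℝ (V p₀)) : ∀ᵐ p ∂ν, LinearIndependent ℝ (V p) := by
  have := Fintype.ofFinite T
  refine ae_mem_of_ae_add_linearMap_mem (s := {p | LinearIndependent ℝ (V p)})
    (ContinuousLinearMap.smulRight (1 : ℝ →L[ℝ] ℝ) p₀).toLinearMap (volume : Measure ℝ) ν
    (isOpen_setOfPred_linearIndependent.preimage V.continuous).measurableSet fun p => ?_
  have h := (finite_setOf_not_linearIndependent_add_smul hp₀ (V p)).countable.ae_notMem volume
  filter_upwards [h] with t ht
  simpa using ht

/-- Almost every coloured family is generic. -/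
theorem ae_generic {d : ℕ} {J : Type*} [Fintype J] (r : J → ℕ) :
    ∀ᵐ p ∂(volume : Measure (Π j : J, Fin (r j) → EuclideanSpace ℝ (Fin d) × ℝ)),
      Arrangement.Generic (fun a : Σ j, Fin (r j) => a.1) fun a => p a.1 a.2 := by
  classical
  simp only [Arrangement.Generic, GeneralPosition]
  refine ae_all_iff.2 fun c => ?_
  by_cases hc : ∀ j, (c j).1 = j
  swap
  · exact Filter.Eventually.of_forall fun p h => absurd h hc
  refine (ae_all_iff.2 fun T => ?_).mono fun p h _ => h
  by_cases hT : T.card ≤ Module.finrank ℝ (EuclideanSpace ℝ (Fin d))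
  swap
  · exact Filter.Eventually.of_forall fun p h => absurd h hT
  let π : (Σ j, Fin (r j)) → (Π j : J, Fin (r j) → EuclideanSpace ℝ (Fin d) × ℝ) →L[ℝ]
      EuclideanSpace ℝ (Fin d) := fun a =>
    (ContinuousLinearMap.fst ℝ (EuclideanSpace ℝ (Fin d)) ℝ).comp
      ((ContinuousLinearMap.proj (R := ℝ)
        (φ := fun _ : Fin (r a.1) => EuclideanSpace ℝ (Fin d) × ℝ) a.2).comp
      (ContinuousLinearMap.proj (R := ℝ)
        (φ := fun j => Fin (r j) → EuclideanSpace ℝ (Fin d) × ℝ) a.1))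
  let V : (Π j : J, Fin (r j) → EuclideanSpace ℝ (Fin d) × ℝ) →L[ℝ]
      ↥T → EuclideanSpace ℝ (Fin d) :=
    ContinuousLinearMap.pi fun b => π (c b.1.1.1) - π b.1.1
  obtain ⟨σ⟩ : Nonempty (↥T ↪ Fin d) :=
    Function.Embedding.nonempty_of_card_le (by simpa using hT)
  let e := EuclideanSpace.basisFun (Fin d) ℝ
  let p₀ : Π j : J, Fin (r j) → EuclideanSpace ℝ (Fin d) × ℝ := fun j i =>
    if h : ∃ b : ↥T, b.1.1 = (⟨j, i⟩ : Σ j, Fin (r j)) then (-e (σ h.choose), 0) else 0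
  have hπT : ∀ b : ↥T, π b.1.1 p₀ = -e (σ b) := by
    intro b
    have hb : ∃ b' : ↥T, b'.1.1 = (⟨b.1.1.1, b.1.1.2⟩ : Σ j, Fin (r j)) := ⟨b, rfl⟩
    have hbb : hb.choose = b := Subtype.ext (Subtype.ext hb.choose_spec)
    change (p₀ b.1.1.1 b.1.1.2).1 = _
    simp only [p₀, dif_pos hb, hbb]
  have hπc : ∀ j, π (c j) p₀ = 0 := by
    intro j
    change (p₀ (c j).1 (c j).2).1 = _
    have hn : ¬ ∃ b' : ↥T, b'.1.1 = (⟨(c j).1, (c j).2⟩ : Σ j, Fin (r j)) := by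
      rintro ⟨b, hb⟩
      exact b.1.2 (by rw [hb]; exact congrArg c (hc j).symm)
    simp only [p₀, dif_neg hn, Prod.fst_zero]
  have hV : V p₀ = fun b => e (σ b) := by
    funext b
    change π (c b.1.1.1) p₀ - π b.1.1 p₀ = _
    rw [hπT, hπc, zero_sub, neg_neg]
  have hind : LinearIndependent ℝ (V p₀) := by
    rw [hV]
    exact e.orthonormal.linearIndependent.comp σ σ.injective
  have h₁ : (volume : Measure (EuclideanSpace ℝ (Fin d) × ℝ)).IsAddHaarMeasure :=
    Measure.prod.instIsAddHaarMeasure _ _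
  have h₂ (k : ℕ) : (volume : Measure (Fin k → EuclideanSpace ℝ (Fin d) × ℝ)).IsAddHaarMeasure :=
    Measure.pi.isAddHaarMeasure _
  have h₃ : (volume : Measure
      (Π j : J, Fin (r j) → EuclideanSpace ℝ (Fin d) × ℝ)).IsAddHaarMeasure :=
    have := fun j => h₂ (r j)
    Measure.pi.isAddHaarMeasure _
  filter_upwards [ae_linearIndependent volume V hind] with p hp _
  exact hp

end AlmostEverywhere

/-! ### Bend loci as tie loci -/

section BendLocus

variable {d r : ℕ} {b : Fin r → EuclideanSpace ℝ (Fin d)} {a : Fin r → ℝ}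

theorem le_plMax (i : Fin r) (x : EuclideanSpace ℝ (Fin d)) : ⟪x, b i⟫ + a i ≤ plMax b a x :=
  le_ciSup (f := fun i => ⟪x, b i⟫ + a i) (Set.finite_range _).bddAbove i

theorem plMax_eq_of_forall_le {i : Fin r} {x : EuclideanSpace ℝ (Fin d)}
    (h : ∀ k, ⟪x, b k⟫ + a k ≤ ⟪x, b i⟫ + a i) : plMax b a x = ⟪x, b i⟫ + a i :=
  have : Nonempty (Fin r) := ⟨i⟩
  le_antisymm (ciSup_le h) (le_plMax i x)

theorem hasFDerivAt_inner_add (v x : EuclideanSpace ℝ (Fin d)) (c : ℝ) :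
    HasFDerivAt (fun y : EuclideanSpace ℝ (Fin d) => ⟪y, v⟫ + c) (innerSL ℝ v) x := by
  have h := (innerSL ℝ v).hasFDerivAt (x := x) |>.add_const c
  simpa [real_inner_comm] using h

/-- Near a point where a single affine piece dominates strictly, a convex PL function is
differentiable. -/
theorem notMem_bendLocus {i : Fin r} {x : EuclideanSpace ℝ (Fin d)}
    (h : ∀ k, k ≠ i → ⟪x, b k⟫ + a k < ⟪x, b i⟫ + a i) : x ∉ bendLocus b a := by
  have hev : ∀ᶠ y in nhds x, ∀ k, ⟪y, b k⟫ + a k ≤ ⟪y, b i⟫ + a i := by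
    refine Filter.eventually_all.2 fun k => ?_
    obtain rfl | hk := eq_or_ne k i
    · exact Filter.Eventually.of_forall fun _ => le_rfl
    · refine (ContinuousAt.eventually_lt ?_ ?_ (h k hk)).mono fun y hy => hy.le
      · exact (hasFDerivAt_inner_add _ _ _).continuousAt
      · exact (hasFDerivAt_inner_add _ _ _).continuousAt
  have heq : plMax b a =ᶠ[nhds x] fun y => ⟪y, b i⟫ + a i :=
    hev.mono fun y hy => plMax_eq_of_forall_le hy
  exact not_not.2 (heq.differentiableAt_iff.2 (hasFDerivAt_inner_add _ _ _).differentiableAt)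

theorem innerSL_eq_of_hasFDerivAt_plMax {i : Fin r} {x : EuclideanSpace ℝ (Fin d)}
    {f' : EuclideanSpace ℝ (Fin d) →L[ℝ] ℝ} (hf : HasFDerivAt (plMax b a) f' x)
    (h : plMax b a x = ⟪x, b i⟫ + a i) : f' = innerSL ℝ (b i) := by
  have hmin : IsLocalMin (fun y => plMax b a y - (⟪y, b i⟫ + a i)) x :=
    Filter.Eventually.of_forall fun y => by
      simpa only [h, sub_self] using sub_nonneg.2 (le_plMax i y)
  exact sub_eq_zero.1 (hmin.hasFDerivAt_eq_zero (hf.sub (hasFDerivAt_inner_add (b i) x (a i))))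

/-- A convex PL function whose slopes are distinct bends exactly where no affine piece dominates
strictly. -/
theorem mem_bendLocus_iff (hb : Function.Injective b) (hr : 0 < r)
    {x : EuclideanSpace ℝ (Fin d)} :
    x ∈ bendLocus b a ↔ ∀ i, ∃ k, k ≠ i ∧ ⟪x, b i⟫ + a i ≤ ⟪x, b k⟫ + a k := by
  constructor
  · intro hx i
    by_contra! hcon
    exact notMem_bendLocus hcon hx
  · rintro h ⟨f', hf⟩
    have : Nonempty (Fin r) := ⟨⟨0, hr⟩⟩
    obtain ⟨i, hi⟩ := Finite.exists_max fun i => ⟪x, b i⟫ + a i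
    obtain ⟨k, hki, hk⟩ := h i
    have h1 := innerSL_eq_of_hasFDerivAt_plMax hf (plMax_eq_of_forall_le hi)
    have h2 := innerSL_eq_of_hasFDerivAt_plMax hf
      (plMax_eq_of_forall_le fun l => (hi l).trans hk)
    refine hki (hb ?_)
    exact (innerSL_inj (𝕜 := ℝ)).1 (h2.symm.trans h1)

end BendLocus

theorem Arrangement.Generic.injective_fst {J : Type*} {d : ℕ} {r : J → ℕ}
    {p : Π j : J, Fin (r j) → EuclideanSpace ℝ (Fin d) × ℝ} (hd : 1 ≤ d) (hr : ∀ j, 0 < r j)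
    (hp : Arrangement.Generic (fun a : Σ j, Fin (r j) => a.1) fun a => p a.1 a.2) (j : J) :
    Function.Injective fun i => (p j i).1 := by
  classical
  intro i k hik
  by_contra hne
  let c : J → Σ j, Fin (r j) := Function.update (fun l => ⟨l, ⟨0, hr l⟩⟩) j ⟨j, i⟩
  have hcj : c j = ⟨j, i⟩ := Function.update_self ..
  have hc : ∀ l, (c l).1 = l := fun l => by
    obtain rfl | hl := eq_or_ne l j
    · rw [hcj]
    · simp only [c, Function.update_of_ne hl]
  let b : {b : Σ j, Fin (r j) // b ≠ c b.1} := ⟨⟨j, k⟩, fun h => hne (by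
    rw [hcj] at h
    exact (eq_of_heq (Sigma.mk.inj h).2).symm)⟩
  have hind := hp c hc {b} (by simpa using hd)
  refine hind.ne_zero (by simp : b ∈ (({b} : Finset _) : Set _)) ?_
  exact sub_eq_zero.2
    ((congrArg (fun a : Σ j, Fin (r j) => (p a.1 a.2).1) hcj).trans hik)

theorem iInter_bendLocus_eq_tieLocus {J : Type*} {d : ℕ} {r : J → ℕ}
    {p : Π j : J, Fin (r j) → EuclideanSpace ℝ (Fin d) × ℝ} (hr : ∀ j, 0 < r j)
    (hp : ∀ j, Function.Injective fun i => (p j i).1) :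
    ⋂ j, bendLocus (fun i => (p j i).1) (fun i => (p j i).2) =
      Arrangement.tieLocus (fun a : Σ j, Fin (r j) => a.1) fun a => p a.1 a.2 := by
  ext x
  have hgap : ∀ j (i k : Fin (r j)),
      Arrangement.gap (fun a : Σ j, Fin (r j) => p a.1 a.2) ⟨j, i⟩ ⟨j, k⟩ x ≤ 0 ↔
        ⟪x, (p j i).1⟫ + (p j i).2 ≤ ⟪x, (p j k).1⟫ + (p j k).2 := fun j i k => by
    rw [Arrangement.gap, inner_sub_left, real_inner_comm x, real_inner_comm x]
    constructor <;> intro h <;> linarith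
  simp only [Set.mem_iInter, mem_bendLocus_iff (hp _) (hr _)]
  constructor
  · rintro h ⟨j, i⟩
    obtain ⟨k, hki, hk⟩ := h j i
    exact ⟨⟨j, k⟩, rfl, fun he => hki (eq_of_heq (Sigma.mk.inj he).2), (hgap j i k).2 hk⟩
  · intro h j i
    obtain ⟨⟨_, k⟩, rfl, hki, hk⟩ := h ⟨j, i⟩
    exact ⟨k, fun he => hki (by rw [he]), (hgap _ i k).1 hk⟩

/-- For Lebesgue-almost-every choice of the coefficient tuples of `n` convex PL functions on
`ℝ^d` (`2 ≤ d`, `1 ≤ n < d`, each a maximum of `r j ≥ 2` affine functions), the complete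
intersection of the corresponding bend loci is `(d - n - 1)`-connected. -/
theorem complete_intersection_connected (d n : ℕ) (hd : 2 ≤ d) (hn : 1 ≤ n) (hnd : n < d)
    (r : Fin n → ℕ) (hr : ∀ j, 2 ≤ r j) :
    ∀ᵐ p ∂(volume : Measure (Π j : Fin n, Fin (r j) → EuclideanSpace ℝ (Fin d) × ℝ)),
      SpaceMConnected (d - n - 1)
        ↥(⋂ j : Fin n, bendLocus (fun i => (p j i).1) (fun i => (p j i).2)) := by
  have hr0 : ∀ j, 0 < r j := fun j => two_pos.trans_le (hr j)
  filter_upwards [ae_generic r] with p hp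
  rw [iInter_bendLocus_eq_tieLocus hr0 (hp.injective_fst (one_le_two.trans hd) hr0)]
  have : Nonempty (Σ j, Fin (r j)) := ⟨⟨⟨0, hn⟩, ⟨0, hr0 _⟩⟩⟩
  refine spaceMConnected_of_exists_map fun m hm D hD =>
    hp.exists_map_tieLocus (fun j => ⟨⟨j, ⟨0, hr0 j⟩⟩, rfl⟩) ?_ ?_ D hD
  · rintro ⟨j, i⟩
    have : Nontrivial (Fin (r j)) := Fin.nontrivial_iff_two_le.2 (hr j)
    obtain ⟨k, hk⟩ := exists_ne i
    exact ⟨⟨j, k⟩, Arrangement.mem_rivals.2 ⟨rfl, fun he => hk (eq_of_heq (Sigma.mk.inj he).2)⟩⟩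
  · rw [Fintype.card_fin, finrank_euclideanSpace_fin]
    omega
end

section
/- Let X be a topological space and let Y be obtained from X by attaching cells of dimension at least m+2 (m ≥ 0); that is, Y is the pushout of X along attaching maps from spheres ∂D^{n_α} of the boundaries of disks D^{n_α} with n_α ≥ m+2 for all α. If Y is (m+1)-connected and X is nonempty, then X is m-connected. -/
universe u

/-- The unit disk `D^n ⊆ ℝ^n`. -/
def unitDisk (n : ℕ) : Set (EuclideanSpace ℝ (Fin n)) := Metric.closedBall 0 1

/-- The boundary sphere `S^{n-1} = ∂D^n ⊆ ℝ^n`. -/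
def unitSphere (n : ℕ) : Set (EuclideanSpace ℝ (Fin n)) := Metric.sphere 0 1

open Topology Set Module

/-- A map into a space of dimension larger than that of the source can be made nowhere zero
without changing it where its norm is at least `δ`. -/
theorem exists_forall_ne_zero_eq_of_le_norm {T E F : Type*} [TopologicalSpace T]
    [NormedAddCommGroup E] [NormedSpace ℝ E] [FiniteDimensional ℝ E]
    [NormedAddCommGroup F] [NormedSpace ℝ F] [FiniteDimensional ℝ F]
    {e : T → E} (he : IsClosedEmbedding e) (hdim : finrank ℝ E < finrank ℝ F)
    (f : C(T, F)) {δ : ℝ} (hδ : 0 < δ) :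
    ∃ h : C(T, F), (∀ t, h t ≠ 0) ∧ ∀ t, δ ≤ ‖f t‖ → h t = f t := by
  have : TietzeExtension F := RCLike.instTietzeExtensionTVS (𝕜 := ℝ)
  obtain ⟨f', hf'⟩ := f.exists_extension' he
  obtain ⟨g, hg⟩ := exists_contMDiffMap_forall_mem_convex_of_local_const (n := 1)
    (modelWithCornersSelf ℝ E) (t := fun x ↦ Metric.ball (f' x) (δ / 4))
    (fun x ↦ convex_ball _ _) (fun x ↦ ⟨f' x, by
      have : ContinuousAt f' x := f'.continuous.continuousAt
      filter_upwards [this (Metric.ball_mem_nhds _ (by positivity : (0 : ℝ) < δ / 4))] with y hy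
      rw [Metric.mem_ball, dist_comm]
      exact hy⟩)
  have hgs : ContDiff ℝ 1 g := g.contMDiff.contDiff
  obtain ⟨p, hp, hpδ⟩ := Metric.dense_iff.1
    (hgs.dense_compl_range_of_finrank_lt_finrank hdim) 0 (δ / 4) (by positivity)
  rw [mem_ball_zero_iff] at hp
  have hclose : ∀ t, ‖g (e t) - p - f t‖ < δ / 2 := fun t ↦ by
    have h1 := hg (e t)
    rw [mem_ball_iff_norm, show f' (e t) = f t from congrFun hf' t] at h1
    calc ‖g (e t) - p - f t‖ = ‖(g (e t) - f t) - p‖ := by congr 1; abel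
      _ ≤ ‖g (e t) - f t‖ + ‖p‖ := norm_sub_le _ _
      _ < δ / 2 := by linarith
  have hne : ∀ t, g (e t) - p ≠ 0 := fun t h ↦ hpδ ⟨e t, sub_eq_zero.1 h⟩
  let c : T → ℝ := fun t ↦ max 0 (min 1 (2 - 2 * ‖f t‖ / δ))
  have hgc : Continuous g := hgs.continuous
  have hec := he.continuous
  refine ⟨⟨fun t ↦ f t + c t • (g (e t) - p - f t), by fun_prop⟩, fun t ↦ ?_, fun t ht ↦ ?_⟩
  · rcases le_total ‖f t‖ (δ / 2) with h | h
    · have : c t = 1 := by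
        have : 2 * ‖f t‖ / δ ≤ 1 := by rw [div_le_one hδ]; linarith
        simp only [c]
        rw [min_eq_left (by linarith), max_eq_right zero_le_one]
      simpa [this] using hne t
    · intro h0
      have hc0 : 0 ≤ c t := le_max_left _ _
      have hc1 : c t ≤ 1 := max_le zero_le_one (min_le_left _ _)
      have h1 : ‖f t‖ = ‖c t • (g (e t) - p - f t)‖ := by
        rw [← norm_neg (f t)]
        exact congrArg norm (neg_eq_of_add_eq_zero_right h0)
      rw [norm_smul, Real.norm_of_nonneg hc0] at h1
      nlinarith [hclose t, norm_nonneg (g (e t) - p - f t)]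
  · have : c t = 0 := by
      have : 2 ≤ 2 * ‖f t‖ / δ := by rw [le_div_iff₀ hδ]; linarith
      exact max_eq_left ((min_le_right _ _).trans (by linarith))
    simp [this]

/-- The space `X` with an extra point `none` whose only neighbourhood is the whole space. -/
def PointCone (X : Type*) := Option X

namespace PointCone

variable {X : Type*}

instance [TopologicalSpace X] : TopologicalSpace (PointCone X) where
  IsOpen s := IsOpen {x : X | (some x : Option X) ∈ s} ∧ ((none : Option X) ∈ s → s = univ)
  isOpen_univ := ⟨isOpen_univ, fun _ ↦ rfl⟩
  isOpen_inter s t hs ht := ⟨hs.1.inter ht.1, fun h ↦ by rw [hs.2 h.1, ht.2 h.2, univ_inter]⟩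
  isOpen_sUnion S hS := by
    refine ⟨?_, fun ⟨s, hs, h⟩ ↦ ?_⟩
    · have : {x : X | (some x : Option X) ∈ ⋃₀ S} = ⋃ s ∈ S, {x : X | (some x : Option X) ∈ s} := by
        ext x
        simp only [mem_ofPred_eq, mem_iUnion, exists_prop]
        exact Iff.rfl
      rw [this]
      exact isOpen_biUnion fun s hs ↦ (hS s hs).1
    · exact univ_subset_iff.1 ((hS s hs).2 h ▸ subset_sUnion_of_mem hs)

/-- The inclusion of `X` in its point cone. -/
def incl (x : X) : PointCone X := (some x : Option X)

/-- The cone point. -/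
def apex : PointCone X := (none : Option X)

theorem incl_injective : Function.Injective (incl : X → PointCone X) := Option.some_injective X

theorem incl_ne_apex (x : X) : incl x ≠ apex := Option.some_ne_none x

theorem exists_incl_eq {p : PointCone X} (hp : p ≠ apex) : ∃ x, incl x = p :=
  Option.ne_none_iff_exists.1 hp

variable [TopologicalSpace X]

theorem isOpen_iff {s : Set (PointCone X)} :
    IsOpen s ↔ IsOpen (incl ⁻¹' s) ∧ (apex ∈ s → s = univ) := Iff.rfl

theorem isOpenEmbedding_incl : IsOpenEmbedding (incl : X → PointCone X) := by
  refine .of_continuous_injective_isOpenMap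
    ⟨fun s hs ↦ (isOpen_iff.1 hs).1⟩ incl_injective fun s hs ↦ isOpen_iff.2 ⟨?_, ?_⟩
  · rwa [preimage_image_eq _ incl_injective]
  · rintro ⟨x, -, hx⟩
    exact (incl_ne_apex x hx).elim

/-- A partial map extended by the apex is continuous as soon as the map is continuous on an open
domain. -/
theorem continuous_of_isOpen {Z : Type*} [TopologicalSpace Z] {f : Z → PointCone X} {U : Set Z}
    (hU : IsOpen U) (hf : ContinuousOn f U) (hapex : ∀ z ∉ U, f z = apex) : Continuous f := by
  refine ⟨fun s hs ↦ ?_⟩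
  by_cases h : apex ∈ s
  · rw [(isOpen_iff.1 hs).2 h]
    exact isOpen_univ
  · have : f ⁻¹' s = U ∩ f ⁻¹' s :=
      (inter_eq_right.2 fun z hz ↦ by_contra fun hzU ↦ h (hapex z hzU ▸ hz)).symm
    rw [this]
    exact hf.isOpen_inter_preimage hU hs

/-- A continuous map to the point cone which misses the apex lifts to the base. -/
theorem exists_lift {Z : Type*} [TopologicalSpace Z] {f : Z → PointCone X} (hf : Continuous f)
    (hapex : ∀ z, f z ≠ apex) : ∃ g : C(Z, X), ∀ z, incl (g z) = f z := by
  choose g hg using fun z ↦ exists_incl_eq (hapex z)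
  refine ⟨⟨g, ?_⟩, hg⟩
  rw [isOpenEmbedding_incl.continuous_iff]
  convert hf
  exact funext hg

end PointCone

/-- Radial projection of nonzero vectors to the unit sphere. -/
noncomputable def toUnitSphere {n : ℕ} (v : EuclideanSpace ℝ (Fin n)) (hv : v ≠ 0) :
    unitSphere n :=
  ⟨‖v‖⁻¹ • v, by simp [unitSphere, norm_smul, hv]⟩

theorem continuous_toUnitSphere {Z : Type*} [TopologicalSpace Z] {n : ℕ}
    {f : Z → EuclideanSpace ℝ (Fin n)} (hf : Continuous f) (h0 : ∀ z, f z ≠ 0) :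
    Continuous fun z ↦ toUnitSphere (f z) (h0 z) :=
  Continuous.subtype_mk ((hf.norm.inv₀ fun z ↦ norm_ne_zero_iff.2 (h0 z)).smul hf) _

open Classical in
/-- The radial extension of a map on the sphere to the disk, with the centre sent to the apex. -/
noncomputable def radialCone {X : Type*} [TopologicalSpace X] {n : ℕ} (φ : C(unitSphere n, X))
    (z : unitDisk n) : PointCone X :=
  if hz : z.1 ≠ 0 then .incl (φ (toUnitSphere z.1 hz)) else .apex

theorem continuous_radialCone {X : Type*} [TopologicalSpace X] {n : ℕ} (φ : C(unitSphere n, X)) :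
    Continuous (radialCone φ) := by
  refine PointCone.continuous_of_isOpen (U := {z | z.1 ≠ 0})
    (isOpen_ne_fun continuous_subtype_val continuous_const) ?_ fun z hz ↦ dif_neg hz
  rw [continuousOn_iff_continuous_domRestrict]
  have : ({z : unitDisk n | z.1 ≠ 0}.domRestrict (radialCone φ)) =
      fun z ↦ .incl (φ (toUnitSphere z.1.1 z.2)) := funext fun z ↦ dif_pos z.2
  rw [this]
  exact PointCone.isOpenEmbedding_incl.continuous.comp (φ.continuous.comp
    (continuous_toUnitSphere (continuous_subtype_val.comp continuous_subtype_val) _))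

/-- `Y` is the pushout of `X` and the disks `unitDisk (ncell α)` along the attaching maps `φ α`. -/
structure IsCellAttachment {X Y ι : Type u} [TopologicalSpace X] [TopologicalSpace Y]
    {ncell : ι → ℕ} (φ : ∀ α, C(unitSphere (ncell α), X)) (i : C(X, Y))
    (Φ : ∀ α, C(unitDisk (ncell α), Y)) : Prop where
  comm : ∀ α (z : unitSphere (ncell α)),
    Φ α ⟨z.1, Metric.sphere_subset_closedBall z.2⟩ = i (φ α z)
  existsUnique_desc : ∀ (Z : Type u) [TopologicalSpace Z] (g : C(X, Z))
    (h : ∀ α, C(unitDisk (ncell α), Z)),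
    (∀ α (z : unitSphere (ncell α)),
      h α ⟨z.1, Metric.sphere_subset_closedBall z.2⟩ = g (φ α z)) →
    ∃! k : C(Y, Z), k.comp i = g ∧ ∀ α, k.comp (Φ α) = h α

namespace IsCellAttachment

variable {X Y ι : Type u} [TopologicalSpace X] [TopologicalSpace Y] {ncell : ι → ℕ}
  {φ : ∀ α, C(unitSphere (ncell α), X)} {i : C(X, Y)} {Φ : ∀ α, C(unitDisk (ncell α), Y)}

theorem exists_desc (hY : IsCellAttachment φ i Φ) {Z : Type u} [TopologicalSpace Z]
    (g : C(X, Z)) (h : ∀ α, C(unitDisk (ncell α), Z))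
    (hgh : ∀ α (z : unitDisk (ncell α)) (hz : z.1 ∈ unitSphere (ncell α)),
      h α z = g (φ α ⟨z.1, hz⟩)) :
    ∃ k : C(Y, Z), (∀ x, k (i x) = g x) ∧ ∀ α z, k (Φ α z) = h α z := by
  obtain ⟨k, ⟨hk, hk'⟩, -⟩ := hY.existsUnique_desc Z g h fun α z ↦
    hgh α ⟨z.1, Metric.sphere_subset_closedBall z.2⟩ z.2
  exact ⟨k, fun x ↦ DFunLike.congr_fun hk x, fun α z ↦ DFunLike.congr_fun (hk' α) z⟩

/-- Continuous maps out of `Y` to a space in the lowest universe. -/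
theorem exists_desc_small (hY : IsCellAttachment φ i Φ) {Z : Type} [TopologicalSpace Z]
    (g : C(X, Z)) (h : ∀ α, C(unitDisk (ncell α), Z))
    (hgh : ∀ α (z : unitDisk (ncell α)) (hz : z.1 ∈ unitSphere (ncell α)),
      h α z = g (φ α ⟨z.1, hz⟩)) :
    ∃ k : C(Y, Z), (∀ x, k (i x) = g x) ∧ ∀ α z, k (Φ α z) = h α z := by
  let up : C(Z, ULift.{u} Z) := ⟨ULift.up, continuous_uliftUp⟩
  obtain ⟨k, hk, hk'⟩ := hY.exists_desc (up.comp g) (fun α ↦ up.comp (h α))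
    fun α z hz ↦ congrArg ULift.up (hgh α z hz)
  exact ⟨⟨fun y ↦ (k y).down, by fun_prop⟩, fun x ↦ congrArg ULift.down (hk x),
    fun α z ↦ congrArg ULift.down (hk' α z)⟩

/-- `Y` is covered by `X` and the cells. -/
theorem exists_eq (hY : IsCellAttachment φ i Φ) (y : Y) :
    (∃ x, i x = y) ∨ ∃ α z, Φ α z = y := by
  let _ : TopologicalSpace (ULift.{u} Prop) := ⊤
  let covered : Y → Prop := fun y ↦ (∃ x, i x = y) ∨ ∃ α z, Φ α z = y
  let k₁ : C(Y, ULift.{u} Prop) := ⟨fun y ↦ ⟨covered y⟩, continuous_top⟩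
  let k₂ : C(Y, ULift.{u} Prop) := ⟨fun _ ↦ ⟨True⟩, continuous_top⟩
  have h₁ : k₁ = k₂ :=
    (hY.existsUnique_desc (ULift.{u} Prop) (k₂.comp i) (fun α ↦ k₂.comp (Φ α))
      fun _ _ ↦ rfl).unique
      ⟨ContinuousMap.ext fun x ↦ congrArg ULift.up (eq_true (Or.inl ⟨x, rfl⟩)),
        fun α ↦ ContinuousMap.ext fun z ↦ congrArg ULift.up (eq_true (Or.inr ⟨α, z, rfl⟩))⟩
      ⟨rfl, fun _ ↦ rfl⟩
  exact of_eq_true (congrArg ULift.down (DFunLike.congr_fun h₁ y))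

/-- The radial coordinate on the union of all cells. -/
theorem exists_radius (hY : IsCellAttachment φ i Φ) :
    ∃ r : C(Y, ℝ), (∀ x, r (i x) = 1) ∧ ∀ α z, r (Φ α z) = ‖z.1‖ :=
  hY.exists_desc_small (.const X 1) (fun _ ↦ ⟨fun z ↦ ‖z.1‖, by fun_prop⟩)
    fun _ _ hz ↦ mem_sphere_zero_iff_norm.1 hz

open Classical in
/-- A function on a single disk which is constant on its boundary extends to `Y` by this
constant. -/
theorem exists_extend_const (hY : IsCellAttachment φ i Φ) {Z : Type} [TopologicalSpace Z]
    (α : ι) (c : Z) (f : C(unitDisk (ncell α), Z))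
    (hf : ∀ z, z.1 ∈ unitSphere (ncell α) → f z = c) :
    ∃ k : C(Y, Z), (∀ x, k (i x) = c) ∧ (∀ z, k (Φ α z) = f z) ∧
      ∀ β, β ≠ α → ∀ z, k (Φ β z) = c := by
  obtain ⟨k, hk, hk'⟩ := hY.exists_desc_small (.const X c)
    (Function.update (fun β ↦ .const (unitDisk (ncell β)) c) α f) (by
      intro β z hz
      rcases eq_or_ne β α with rfl | h
      · simpa using hf z hz
      · simp [h])
  exact ⟨k, hk, fun z ↦ by simp [hk'], fun β hβ z ↦ by simp [hk', hβ]⟩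

/-- The radial retraction of `Y` to `X`, with the centres of the cells sent to the apex. -/
theorem exists_retraction_pointCone (hY : IsCellAttachment φ i Φ) :
    ∃ k : C(Y, PointCone X), (∀ x, k (i x) = .incl x) ∧ ∀ α z, k (Φ α z) = radialCone (φ α) z := by
  refine hY.exists_desc ⟨PointCone.incl, PointCone.isOpenEmbedding_incl.continuous⟩
    (fun α ↦ ⟨radialCone (φ α), continuous_radialCone _⟩) fun α z hz ↦ ?_
  have h1 : ‖z.1‖ = 1 := mem_sphere_zero_iff_norm.1 hz
  have h0 : z.1 ≠ 0 := norm_ne_zero_iff.1 (by simp [h1])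
  have : toUnitSphere z.1 h0 = ⟨z.1, hz⟩ := Subtype.ext (by simp [toUnitSphere, h1])
  exact (dif_pos h0).trans (by rw [this]; rfl)

/-- A map to `Y` from a space of dimension smaller than that of all the cells can be pushed to `X`
relative to the preimage of `X`. -/
theorem exists_compression (hY : IsCellAttachment φ i Φ) {T E : Type*} [TopologicalSpace T]
    [NormedAddCommGroup E] [NormedSpace ℝ E] [FiniteDimensional ℝ E]
    {e : T → E} (he : IsClosedEmbedding e) (hdim : ∀ α, finrank ℝ E < ncell α) (H : C(T, Y)) :
    ∃ F : C(T, X), ∀ t x, H t = i x → F t = x := by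
  obtain ⟨r, hri, hrΦ⟩ := hY.exists_radius
  obtain ⟨k, hki, hkΦ⟩ := hY.exists_retraction_pointCone
  choose rad hradi hradΦ hradne using fun α ↦ hY.exists_extend_const α (1 : ℝ)
    ⟨fun z ↦ ‖z.1‖, by fun_prop⟩ fun z hz ↦ mem_sphere_zero_iff_norm.1 hz
  choose coord _ hcoordΦ _ using fun α ↦ hY.exists_extend_const α
    (0 : EuclideanSpace ℝ (Fin (ncell α)))
    ⟨fun z ↦ min 1 (2 - 2 * ‖z.1‖) • z.1, by fun_prop⟩
    fun z hz ↦ by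
      have : ‖z.1‖ = 1 := mem_sphere_zero_iff_norm.1 hz
      simp [this]
  choose h hne heq using fun α ↦ exists_forall_ne_zero_eq_of_le_norm he
    (by simpa using hdim α) ((coord α).comp H) (δ := 1 / 2) (by norm_num)
  let u : ∀ α, T → X := fun α t ↦ φ α (toUnitSphere (h α t) (hne α t))
  have hu : ∀ α, Continuous (u α) := fun α ↦
    (φ α).continuous.comp (continuous_toUnitSphere (h α).continuous _)
  have hrad : ∀ {α y}, rad α y < 1 → ∃ z : unitDisk (ncell α), Φ α z = y := by
    intro α y hy
    rcases hY.exists_eq y with ⟨x, rfl⟩ | ⟨β, z, rfl⟩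
    · exact absurd (hradi α x) hy.ne
    · rcases eq_or_ne β α with rfl | hβ
      · exact ⟨z, rfl⟩
      · exact absurd (hradne α β hβ z) hy.ne
  have hunique : ∀ {α β y}, rad α y < 1 → rad β y < 1 → α = β := by
    intro α β y hα hβ
    obtain ⟨z, rfl⟩ := hrad hα
    by_contra hαβ
    exact hβ.ne (hradne β α hαβ z)
  have hcell : ∀ {y}, r y ≤ 1 / 2 → ∃ α, rad α y < 1 := by
    intro y hy
    rcases hY.exists_eq y with ⟨x, rfl⟩ | ⟨α, z, rfl⟩
    · rw [hri] at hy
      norm_num at hy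
    · refine ⟨α, (hradΦ α z).trans_lt ?_⟩
      rw [hrΦ] at hy
      exact hy.trans_lt (by norm_num)
  have hkne : ∀ {y}, 1 / 2 ≤ r y → k y ≠ .apex := by
    intro y hy
    rcases hY.exists_eq y with ⟨x, rfl⟩ | ⟨α, z, rfl⟩
    · exact hki x ▸ PointCone.incl_ne_apex x
    · rw [hrΦ] at hy
      have hz : z.1 ≠ 0 := norm_pos_iff.1 (by linarith)
      rw [hkΦ, radialCone, dif_pos hz]
      exact PointCone.incl_ne_apex _
  have hglue : ∀ {t α}, r (H t) = 1 / 2 → rad α (H t) < 1 → k (H t) = .incl (u α t) := by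
    intro t α ht hα
    obtain ⟨z, hz⟩ := hrad hα
    rw [← hz, hrΦ] at ht
    have hz0 : z.1 ≠ 0 := norm_pos_iff.1 (by rw [ht]; norm_num)
    have hc : coord α (H t) = z.1 := by
      rw [← hz, hcoordΦ]
      simp [ht]
      norm_num
    have hh : h α t = z.1 := (heq α t (by simp [hc, ht])).trans hc
    rw [← hz, hkΦ, radialCone, dif_pos hz0]
    simp only [u, hh]
  classical
  let s : T → PointCone X := fun t ↦
    if hα : ∃ α, rad α (H t) < 1 then .incl (u hα.choose t) else .apex
  have hs : ∀ {t α}, rad α (H t) < 1 → s t = .incl (u α t) := by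
    intro t α hα
    have hex : ∃ α, rad α (H t) < 1 := ⟨α, hα⟩
    rw [show s t = .incl (u hex.choose t) from dif_pos hex, hunique hex.choose_spec hα]
  have hscont : ContinuousOn s {t | r (H t) ≤ 1 / 2} := by
    intro t ht
    obtain ⟨α, hα⟩ := hcell ht
    have hcont : ContinuousAt (fun t ↦ PointCone.incl (u α t)) t :=
      (PointCone.isOpenEmbedding_incl.continuous.comp (hu α)).continuousAt
    refine (hcont.congr ?_).continuousWithinAt
    have hlt : ∀ᶠ t' in 𝓝 t, rad α (H t') < 1 :=
      ((rad α).comp H).continuous.continuousAt.eventually_lt_const hα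
    filter_upwards [hlt] with t' ht' using (hs ht').symm
  have hG : Continuous fun t ↦ if r (H t) ≤ 1 / 2 then s t else k (H t) :=
    continuous_if_le (by fun_prop) continuous_const hscont (by fun_prop) fun t ht ↦ by
      obtain ⟨α, hα⟩ := hcell ht.le
      rw [hs hα, hglue ht hα]
  obtain ⟨F, hF⟩ := PointCone.exists_lift hG fun t ↦ by
    split_ifs with ht
    · obtain ⟨α, hα⟩ := hcell ht
      exact hs hα ▸ PointCone.incl_ne_apex _
    · exact hkne (not_le.1 ht).le
  refine ⟨F, fun t x htx ↦ PointCone.incl_injective ?_⟩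
  rw [hF, htx, hri, if_neg (by norm_num), hki]

end IsCellAttachment

/-- Suppose `Y` is obtained from `X` by attaching cells of dimensions `ncell α ≥ m + 2`:
`Y` is the pushout (in the category of topological spaces, expressed by its universal
property) of `X` and the disks `D^{ncell α}` along attaching maps
`φ α : ∂D^{ncell α} → X`. If `Y` is `(m + 1)`-connected and `X` is nonempty, then `X` is
`m`-connected. -/
theorem connected_of_attach_high_cells (m : ℕ) (X Y : Type u)
    [TopologicalSpace X] [TopologicalSpace Y]
    (ι : Type u) (ncell : ι → ℕ) (hcell : ∀ α, m + 2 ≤ ncell α)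
    (φ : ∀ α, C(↥(unitSphere (ncell α)), X))
    (i : C(X, Y)) (Φ : ∀ α, C(↥(unitDisk (ncell α)), Y))
    (hcomm : ∀ α (z : ↥(unitSphere (ncell α))),
      Φ α ⟨z.1, Metric.sphere_subset_closedBall z.2⟩ = i (φ α z))
    (huniv : ∀ (Z : Type u) [TopologicalSpace Z] (g : C(X, Z))
      (h : ∀ α, C(↥(unitDisk (ncell α)), Z)),
      (∀ α (z : ↥(unitSphere (ncell α))),
        h α ⟨z.1, Metric.sphere_subset_closedBall z.2⟩ = g (φ α z)) →
      ∃! k : C(Y, Z), k.comp i = g ∧ ∀ α, k.comp (Φ α) = h α)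
    (hY : SpaceMConnected (m + 1) Y) (hX : Nonempty X) :
    SpaceMConnected m X := by
  have hatt : IsCellAttachment φ i Φ := ⟨hcomm, huniv⟩
  obtain ⟨-, hpath, hπ⟩ := hY
  refine ⟨hX, ⟨hX, fun x y ↦ ?_⟩, fun k hk hkm x ↦ ⟨fun a b ↦ ?_⟩⟩
  · obtain ⟨p⟩ := hpath.joined (i x) (i y)
    obtain ⟨F, hF⟩ := hatt.exists_compression (e := ((↑) : unitInterval → ℝ))
      isClosed_Icc.isClosedEmbedding_subtypeVal
      (fun α ↦ by have := hcell α; rw [finrank_self]; omega) p.toContinuousMap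
    exact ⟨⟨F, hF 0 x p.source, hF 1 y p.target⟩⟩
  · induction a, b using Quotient.inductionOn₂ with | _ f g => ?_
    let push : GenLoop (Fin k) X x → GenLoop (Fin k) Y (i x) := fun f ↦
      ⟨i.comp f.1, fun z hz ↦ congrArg i (f.2 z hz)⟩
    obtain ⟨H⟩ : GenLoop.Homotopic (push f) (push g) :=
      Quotient.exact ((hπ k hk (by omega) (i x)).elim (Quotient.mk _ _) (Quotient.mk _ _))
    have he : IsClosedEmbedding
        (fun t : unitInterval × (Fin k → unitInterval) ↦ ((t.1 : ℝ), fun j ↦ (t.2 j : ℝ))) :=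
      Continuous.isClosedEmbedding (by fun_prop) fun s t hst ↦ by
        simp only [Prod.mk.injEq, funext_iff] at hst
        exact Prod.ext (Subtype.ext hst.1) (funext fun j ↦ Subtype.ext (hst.2 j))
    obtain ⟨F, hF⟩ := hatt.exists_compression he
      (fun α ↦ by have := hcell α; simp; omega) H.toContinuousMap
    exact Quotient.sound ⟨⟨⟨F, fun z ↦ hF _ _ (H.apply_zero z), fun z ↦ hF _ _ (H.apply_one z)⟩,
      fun t z hz ↦ hF _ _ (H.eq_fst t hz)⟩⟩
end
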